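/- arXiv:2102.06939 — 8 statements merged into one kernel-verified Lean document; each statement's English description precedes it below -/
import Mathlib

section
/- Let U be a finite set and k ≥ 2 an integer with k ≤ |U|. Let d be the unique positive integer with 2^{d-1} < k/ln k ≤ 2^d, and set d1 = 2^d, d2 = ⌈8 ln k⌉, d3 = ⌈13 ln k⌉². Let H be a ⌈12 ln k⌉-wise independent family of functions from U to {0,...,d1-1}, and let H' be a universal family of functions from U to {0,...,d3-1}. Choose f uniformly at random from H, and choose the d1·d2 functions h_{j,i} (for j ∈ {0,...,d1-1}, i ∈ {1,...,d2}) independently and uniformly at random from H'. Then for every subset S ⊆ U of cardinality k, with probability at least 1 - 4/(k³ ln k) there exist k distinct indices i_0, ..., i_{k-1} ∈ {0,...,d1·d2·d3 - 1} such that: (1) |T_{i_j} ∩ S| = 1 for every j ∈ {0,...,k-1}; (2) S ⊆ ∪_{j ∈ {0,...,k-1}} T_{i_j}; and (3) T_{i_j} ∩ T_{i_l} = ∅ for all distinct j, l ∈ {0,...,k-1}. -/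
open Finset

/-- For `f : U → Fin d1` and a family `F` of functions
`F (j, i) : U → Fin d3` (for `j : Fin d1`, `i : Fin d2`), the set
`T a = { x | a ∈ G(x) }` where
`G(x) = { (f x)·d2·d3 + i·d3 + F (f x, i) x : i : Fin d2 }`. -/
def Tset {U : Type*} {d1 d2 d3 : ℕ} (f : U → Fin d1)
    (F : Fin d1 × Fin d2 → U → Fin d3) (a : ℕ) : Set U :=
  {x : U | ∃ i : Fin d2,
    a = (f x : ℕ) * d2 * d3 + (i : ℕ) * d3 + (F (f x, i) x : ℕ)}

open Classical in
theorem aux_bucket {U : Type*} [DecidableEq U] {d1 κ : ℕ}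
    (Hfam : Finset (U → Fin d1))
    (hHindep : ∀ x : Fin κ → U, Function.Injective x →
      ∀ a : Fin κ → Fin d1,
        (Hfam.filter (fun h => ∀ l, h (x l) = a l)).card * d1 ^ κ = Hfam.card)
    (S : Finset U) (j : Fin d1) :
    (Hfam.filter (fun f => κ ≤ (S.filter (fun x => f x = j)).card)).card * d1 ^ κ
      ≤ S.card.choose κ * Hfam.card := by
  have hsub : Hfam.filter (fun f => κ ≤ (S.filter (fun x => f x = j)).card) ⊆
      (S.powersetCard κ).biUnion (fun A => Hfam.filter (fun f => ∀ x ∈ A, f x = j)) := by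
    intro f hf
    rw [Finset.mem_filter] at hf
    obtain ⟨A, hA, hAc⟩ := Finset.exists_subset_card_eq hf.2
    rw [Finset.mem_biUnion]
    refine ⟨A, Finset.mem_powersetCard.2 ⟨hA.trans (Finset.filter_subset _ _), hAc⟩, ?_⟩
    rw [Finset.mem_filter]
    exact ⟨hf.1, fun x hx => (Finset.mem_filter.1 (hA hx)).2⟩
  have h1 := (Finset.card_le_card hsub).trans Finset.card_biUnion_le
  calc _ ≤ (∑ A ∈ S.powersetCard κ, (Hfam.filter (fun f => ∀ x ∈ A, f x = j)).card) * d1 ^ κ :=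
        Nat.mul_le_mul_right _ h1
    _ = ∑ A ∈ S.powersetCard κ, (Hfam.filter (fun f => ∀ x ∈ A, f x = j)).card * d1 ^ κ :=
        Finset.sum_mul _ _ _
    _ = ∑ A ∈ S.powersetCard κ, Hfam.card := by
        refine Finset.sum_congr rfl fun A hA => ?_
        have hc := (Finset.mem_powersetCard.1 hA).2
        let e := A.equivFinOfCardEq hc
        rw [← hHindep (fun l => (e.symm l : U))
          (Subtype.val_injective.comp e.symm.injective) (fun _ => j)]
        congr 2
        ext f
        simp only [Finset.mem_filter]
        refine and_congr_right fun _ => ⟨fun h l => h _ (e.symm l).2, fun h x hx => ?_⟩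
        have := h (e ⟨x, hx⟩)
        simpa using this
    _ = _ := by rw [Finset.sum_const, Finset.card_powersetCard, smul_eq_mul]

open Classical in
theorem aux_coll {U : Type*} [DecidableEq U] {d3 : ℕ}
    (Hfam' : Finset (U → Fin d3))
    (hH'univ : ∀ x y : U, x ≠ y →
      (Hfam'.filter (fun h => h x = h y)).card * d3 ≤ Hfam'.card)
    (A : Finset U) (hA : A.card ^ 2 ≤ d3) (hd3 : 0 < d3) :
    2 * (Hfam'.filter (fun h => ¬ Set.InjOn h (A : Set U))).card ≤ Hfam'.card := by
  set B := Hfam'.filter (fun h => ¬ Set.InjOn h (A : Set U)) with hB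
  have h1 : 2 * B.card ≤ ∑ h ∈ Hfam', (A.offDiag.filter (fun p => h p.1 = h p.2)).card := by
    calc 2 * B.card = ∑ h ∈ B, 2 := by rw [Finset.sum_const, smul_eq_mul, mul_comm]
      _ ≤ ∑ h ∈ B, (A.offDiag.filter (fun p => h p.1 = h p.2)).card := by
        refine Finset.sum_le_sum fun h hh => ?_
        have hn := (Finset.mem_filter.1 hh).2
        simp only [Set.InjOn] at hn
        push Not at hn
        obtain ⟨x, hx, y, hy, hxy, hne⟩ := hn
        have hs : ({(x, y), (y, x)} : Finset (U × U)) ⊆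
            A.offDiag.filter (fun p => h p.1 = h p.2) := by
          intro p hp
          simp only [Finset.mem_insert, Finset.mem_singleton] at hp
          rw [Finset.mem_filter, Finset.mem_offDiag]
          rcases hp with rfl | rfl
          · exact ⟨⟨hx, hy, hne⟩, hxy⟩
          · exact ⟨⟨hy, hx, hne.symm⟩, hxy.symm⟩
        have := Finset.card_le_card hs
        rwa [Finset.card_pair (by simp [hne])] at this
      _ ≤ _ := Finset.sum_le_sum_of_subset (Finset.filter_subset _ _)
  have h2 : ∑ h ∈ Hfam', (A.offDiag.filter (fun p => h p.1 = h p.2)).card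
      = ∑ p ∈ A.offDiag, (Hfam'.filter (fun h => h p.1 = h p.2)).card := by
    simp only [Finset.card_filter]
    exact Finset.sum_comm
  have h3 : (∑ p ∈ A.offDiag, (Hfam'.filter (fun h => h p.1 = h p.2)).card) * d3
      ≤ d3 * Hfam'.card := by
    rw [Finset.sum_mul]
    calc _ ≤ ∑ p ∈ A.offDiag, Hfam'.card :=
          Finset.sum_le_sum fun p hp => hH'univ _ _ (Finset.mem_offDiag.1 hp).2.2
      _ = A.offDiag.card * Hfam'.card := by rw [Finset.sum_const, smul_eq_mul]
      _ ≤ _ := by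
        refine Nat.mul_le_mul_right _ ?_
        rw [Finset.offDiag_card]
        exact (Nat.sub_le _ _).trans (by rwa [← sq])
  rw [← h2] at h3
  have : 2 * B.card * d3 ≤ Hfam'.card * d3 := by
    calc _ ≤ _ := Nat.mul_le_mul_right d3 h1
      _ ≤ _ := h3
      _ = _ := mul_comm _ _
  exact Nat.le_of_mul_le_mul_right this hd3

open Classical in
theorem aux_row {V : Type*} {d1 d2 : ℕ} (K B : Finset V)
    (hB2 : 2 * B.card ≤ K.card) (j : Fin d1) :
    (((Fintype.piFinset (fun _ : Fin d1 × Fin d2 => K)).filter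
      (fun F => ∀ i, F (j, i) ∈ B)).card : ℝ) ≤ (1 / 2) ^ d2 * (K.card : ℝ) ^ (d1 * d2) := by
  have hsub : (Fintype.piFinset (fun _ : Fin d1 × Fin d2 => K)).filter
      (fun F => ∀ i, F (j, i) ∈ B) ⊆
      Fintype.piFinset (fun p : Fin d1 × Fin d2 => if p.1 = j then B else K) := by
    intro F hF
    rw [Finset.mem_filter, Fintype.mem_piFinset] at hF
    rw [Fintype.mem_piFinset]
    rintro ⟨j', i⟩
    by_cases h : j' = j
    · subst h; simpa using hF.2 i
    · simpa [h] using hF.1 (j', i)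
  have h1 := Finset.card_le_card hsub
  rw [Fintype.card_piFinset] at h1
  have h1' : (((Fintype.piFinset (fun _ : Fin d1 × Fin d2 => K)).filter
      (fun F => ∀ i, F (j, i) ∈ B)).card : ℝ) ≤
      ∏ p : Fin d1 × Fin d2, (((if p.1 = j then B else K).card : ℕ) : ℝ) := by
    exact_mod_cast h1
  refine h1'.trans ?_
  have hB2' : (2 : ℝ) * B.card ≤ K.card := by exact_mod_cast hB2
  calc _ ≤ ∏ p : Fin d1 × Fin d2, ((if p.1 = j then (1 / 2 : ℝ) else 1) * (K.card : ℝ)) := by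
        refine Finset.prod_le_prod (fun _ _ => Nat.cast_nonneg _) fun p _ => ?_
        by_cases h : p.1 = j
        · simp only [h, if_true]; linarith
        · simp [h]
    _ = _ := by
        rw [Finset.prod_mul_distrib, Finset.prod_const, Finset.card_univ, Fintype.card_prod,
          Fintype.card_fin, Fintype.card_fin, Fintype.prod_prod_type]
        congr 1
        simp only [Finset.prod_const, Finset.card_univ, Fintype.card_fin]
        rw [Finset.prod_eq_single j]
        · simp
        · intro b _ hb; simp [hb]
        · simp

theorem aux_inj {d1 d2 d3 a a' i i' v v' : ℕ} (hi : i < d2) (hi' : i' < d2)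
    (hv : v < d3) (hv' : v' < d3)
    (h : a * d2 * d3 + i * d3 + v = a' * d2 * d3 + i' * d3 + v') :
    a = a' ∧ i = i' ∧ v = v' := by
  have h' : v + d3 * (a * d2 + i) = v' + d3 * (a' * d2 + i') := by linarith
  have hv2 : v = v' := by
    have := congrArg (· % d3) h'
    simpa [Nat.add_mul_mod_self_left, Nat.mod_eq_of_lt hv, Nat.mod_eq_of_lt hv'] using this
  subst hv2
  have h2 : i + d2 * a = i' + d2 * a' := by
    have := Nat.eq_of_mul_eq_mul_left (by omega : 0 < d3) (Nat.add_left_cancel h')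
    linarith
  have hi2 : i = i' := by
    have := congrArg (· % d2) h2
    simpa [Nat.add_mul_mod_self_left, Nat.mod_eq_of_lt hi, Nat.mod_eq_of_lt hi'] using this
  subst hi2
  exact ⟨Nat.eq_of_mul_eq_mul_left (by omega : 0 < d2) (Nat.add_left_cancel h2), rfl, rfl⟩

theorem aux_good {U : Type*} [DecidableEq U] {k d1 d2 d3 : ℕ} (f : U → Fin d1)
    (F : Fin d1 × Fin d2 → U → Fin d3) (S : Finset U) (hS : S.card = k)
    (hg : ∀ j : Fin d1, ∃ i : Fin d2, Set.InjOn (F (j, i)) (S.filter (fun x => f x = j) : Finset U)) :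
    ∃ ι : Fin k → ℕ, Function.Injective ι ∧
            (∀ j : Fin k, ι j < d1 * d2 * d3) ∧
            (∀ j : Fin k, ∃! x : U, x ∈ S ∧ x ∈ Tset f F (ι j)) ∧
            (∀ x ∈ S, ∃ j : Fin k, x ∈ Tset f F (ι j)) ∧
            (∀ j l : Fin k, j ≠ l →
              Tset f F (ι j) ∩ Tset f F (ι l) = ∅) := by
  choose c hc using hg
  let e := S.equivFinOfCardEq hS
  let g : U → ℕ := fun x => (f x : ℕ) * d2 * d3 + (c (f x) : ℕ) * d3 + (F (f x, c (f x)) x : ℕ)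
  have key : ∀ x y : U, x ∈ Tset f F (g y) →
      f x = f y ∧ F (f y, c (f y)) x = F (f y, c (f y)) y := by
    rintro x y ⟨i, hi⟩
    obtain ⟨h1, h2, h3⟩ := aux_inj (d1 := d1) (c (f y)).2 i.2 (Fin.is_lt _) (Fin.is_lt _) hi
    have h1 := Fin.ext h1
    have h2 := Fin.ext h2
    have h3 := Fin.ext h3
    rw [← h1, ← h2] at h3
    exact ⟨h1.symm, h3.symm⟩
  have self : ∀ x, x ∈ Tset f F (g x) := fun x => ⟨c (f x), rfl⟩
  have key2 : ∀ x ∈ S, ∀ y ∈ S, f x = f y →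
      F (f y, c (f y)) x = F (f y, c (f y)) y → x = y := by
    intro x hx y hy h1 h2
    exact hc (f y) (by simp [hx, h1]) (by simp [hy]) h2
  refine ⟨fun l => g (e.symm l), ?_, ?_, ?_, ?_, ?_⟩
  · intro l m h
    have h' : g (e.symm l) = g (e.symm m) := h
    have := self (e.symm l : U)
    rw [h'] at this
    obtain ⟨h1, h2⟩ := key _ _ this
    exact e.symm.injective (Subtype.ext (key2 _ (e.symm l).2 _ (e.symm m).2 h1 h2))
  · intro l
    set x : U := (e.symm l).1
    have h1 := (f x).2
    have h2 := (c (f x)).2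
    have h3 := (F (f x, c (f x)) x).2
    show (f x : ℕ) * d2 * d3 + (c (f x) : ℕ) * d3 + (F (f x, c (f x)) x : ℕ) < d1 * d2 * d3
    calc _ < (f x : ℕ) * d2 * d3 + (c (f x) : ℕ) * d3 + d3 := by omega
      _ = ((f x : ℕ) * d2 + ((c (f x) : ℕ) + 1)) * d3 := by ring
      _ ≤ ((f x : ℕ) * d2 + d2) * d3 := by gcongr; omega
      _ = ((f x : ℕ) + 1) * d2 * d3 := by ring
      _ ≤ _ := by gcongr; omega
  · intro l
    refine ⟨e.symm l, ⟨(e.symm l).2, self _⟩, ?_⟩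
    rintro y ⟨hy, hy2⟩
    obtain ⟨h1, h2⟩ := key _ _ hy2
    exact key2 _ hy _ (e.symm l).2 h1 h2
  · intro x hx
    exact ⟨e ⟨x, hx⟩, by simpa using self x⟩
  · intro l m hlm
    rw [Set.eq_empty_iff_forall_notMem]
    rintro y ⟨h1, h2⟩
    obtain ⟨a1, a2⟩ := key _ _ h1
    obtain ⟨b1, b2⟩ := key _ _ h2
    rw [← a1] at a2
    rw [← b1] at b2
    refine hlm (e.symm.injective (Subtype.ext
      (key2 _ (e.symm l).2 _ (e.symm m).2 (a1.symm.trans b1) ?_)))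
    rw [← b1, ← a2, ← b2]

theorem aux_num {k κ : ℕ} {L D : ℝ} (hL : 0 < L) (hD : 0 < D) (hkD : (k : ℝ) / L ≤ D)
    (hκ : 12 * L ≤ κ) : (k.choose κ : ℝ) / D ^ κ ≤ Real.exp (-(4 * L)) := by
  have h0 : (k : ℝ) ≤ D * (κ / 12) := by
    rw [div_le_iff₀ hL] at hkD
    exact hkD.trans (by gcongr; linarith)
  have h1 : (k.choose κ : ℝ) ≤ (k : ℝ) ^ κ / κ.factorial := Nat.choose_le_pow_div κ k
  have h2 : (κ : ℝ) ^ κ / κ.factorial ≤ Real.exp κ :=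
    Real.pow_div_factorial_le_exp _ (Nat.cast_nonneg _) _
  have he : Real.exp 2 ≤ 12 := by
    have := Real.exp_one_lt_d9
    have e2 : Real.exp 2 = Real.exp 1 * Real.exp 1 := by rw [← Real.exp_add]; norm_num
    have := Real.exp_pos 1
    rw [e2]; nlinarith
  calc (k.choose κ : ℝ) / D ^ κ ≤ ((D * (κ / 12)) ^ κ / κ.factorial) / D ^ κ := by
        gcongr
        exact h1.trans (by gcongr)
    _ = (κ : ℝ) ^ κ / κ.factorial / 12 ^ κ := by
        rw [mul_pow, div_pow]; field_simp
    _ ≤ Real.exp κ / (Real.exp 2) ^ κ := by gcongr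
    _ = Real.exp (-κ) := by
        rw [← Real.exp_nat_mul, ← Real.exp_sub]; congr 1; ring
    _ ≤ _ := Real.exp_le_exp.2 (by linarith)

theorem aux_num2 {d2 : ℕ} {L : ℝ} (hL : 0 < L) (h : 8 * L ≤ d2) :
    (1 / 2 : ℝ) ^ d2 ≤ Real.exp (-(4 * L)) := by
  have : (1 / 2 : ℝ) = Real.exp (-Real.log 2) := by
    rw [Real.exp_neg, Real.exp_log (by norm_num)]; norm_num
  rw [this, ← Real.exp_nat_mul]
  apply Real.exp_le_exp.2
  have := Real.log_two_gt_d9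
  nlinarith

set_option maxHeartbeats 2000000 in
open Classical in
theorem stmt2 {U : Type*} [Fintype U] [DecidableEq U]
    (k : ℕ) (hk : 2 ≤ k) (hkU : k ≤ Fintype.card U)
    (d : ℕ) (hd : 0 < d)
    (hdlow : (2 : ℝ) ^ (d - 1) < (k : ℝ) / Real.log k)
    (hdhigh : (k : ℝ) / Real.log k ≤ (2 : ℝ) ^ d)
    (d1 d2 d3 : ℕ) (hd1 : d1 = 2 ^ d)
    (hd2 : d2 = ⌈(8 : ℝ) * Real.log k⌉₊)
    (hd3 : d3 = ⌈(13 : ℝ) * Real.log k⌉₊ ^ 2)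
    (Hfam : Finset (U → Fin d1)) (hHne : Hfam.Nonempty)
    (hHindep : ∀ x : Fin ⌈(12 : ℝ) * Real.log k⌉₊ → U, Function.Injective x →
      ∀ a : Fin ⌈(12 : ℝ) * Real.log k⌉₊ → Fin d1,
        (Hfam.filter (fun h => ∀ l, h (x l) = a l)).card *
            d1 ^ (⌈(12 : ℝ) * Real.log k⌉₊ : ℕ) = Hfam.card)
    (Hfam' : Finset (U → Fin d3)) (hH'ne : Hfam'.Nonempty)
    (hH'univ : ∀ x y : U, x ≠ y →
      (Hfam'.filter (fun h => h x = h y)).card * d3 ≤ Hfam'.card)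
    (S : Finset U) (hS : S.card = k) :
    ((1 : ℝ) - 4 / ((k : ℝ) ^ 3 * Real.log k)) *
        ((Hfam.card : ℝ) * (Hfam'.card : ℝ) ^ (d1 * d2)) ≤
      (((Hfam ×ˢ Fintype.piFinset (fun _ : Fin d1 × Fin d2 => Hfam')).filter
        (fun fF : (U → Fin d1) × (Fin d1 × Fin d2 → U → Fin d3) =>
          ∃ ι : Fin k → ℕ, Function.Injective ι ∧
            (∀ j : Fin k, ι j < d1 * d2 * d3) ∧
            (∀ j : Fin k, ∃! x : U, x ∈ S ∧ x ∈ Tset fF.1 fF.2 (ι j)) ∧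
            (∀ x ∈ S, ∃ j : Fin k, x ∈ Tset fF.1 fF.2 (ι j)) ∧
            (∀ j l : Fin k, j ≠ l →
              Tset fF.1 fF.2 (ι j) ∩ Tset fF.1 fF.2 (ι l) = ∅))).card : ℝ) := by
  have hk1 : (1 : ℝ) < k := by exact_mod_cast hk
  have hk0 : (0 : ℝ) < k := by linarith
  set L := Real.log k with hLdef
  have hL : 0 < L := Real.log_pos hk1
  set κ := ⌈(12 : ℝ) * L⌉₊ with hκ
  have hκ1 : 12 * L ≤ κ := Nat.le_ceil _
  have hD : (d1 : ℝ) = 2 ^ d := by rw [hd1]; push_cast; rfl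
  have hDpos : (0 : ℝ) < d1 := by rw [hD]; positivity
  have hDlt : (d1 : ℝ) ≤ 2 * (k / L) := by
    obtain ⟨m, rfl⟩ : ∃ m, d = m + 1 := ⟨d - 1, by omega⟩
    rw [hD, pow_succ]
    simp only [Nat.add_sub_cancel] at hdlow
    linarith
  have h8 : 8 * L ≤ d2 := by rw [hd2]; exact Nat.le_ceil _
  have h13 : (13 * L) ≤ (⌈(13 : ℝ) * L⌉₊ : ℝ) := Nat.le_ceil _
  have hd3' : (13 * L) ^ 2 ≤ (d3 : ℝ) := by
    rw [hd3]; push_cast; gcongr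
  have hd3pos : 0 < d3 := by
    have : (0 : ℝ) < d3 := lt_of_lt_of_le (by positivity) hd3'
    exact_mod_cast this
  have hexp : Real.exp (-(4 * L)) = 1 / (k : ℝ) ^ 4 := by
    rw [Real.exp_neg, show (4 * L) = ((4 : ℕ) : ℝ) * L by norm_num, Real.exp_nat_mul,
      hLdef, Real.exp_log hk0, one_div]
  have heps : (d1 : ℝ) * Real.exp (-(4 * L)) ≤ 2 / ((k : ℝ) ^ 3 * L) := by
    rw [hexp]
    calc _ ≤ 2 * (k / L) * (1 / (k : ℝ) ^ 4) := by gcongr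
      _ = _ := by field_simp
  set P := Fintype.piFinset (fun _ : Fin d1 × Fin d2 => Hfam') with hP
  have hPc : (P.card : ℝ) = (Hfam'.card : ℝ) ^ (d1 * d2) := by
    rw [hP, Fintype.card_piFinset]; simp
  set N : ℝ := (Hfam'.card : ℝ) ^ (d1 * d2) with hN
  have hN0 : 0 ≤ N := by positivity
  let sz : (U → Fin d1) → Fin d1 → Finset U := fun f j => S.filter (fun x => f x = j)
  let bad1 : Finset (U → Fin d1) :=
    Finset.univ.biUnion (fun j : Fin d1 =>
      Hfam.filter (fun f => κ ≤ (S.filter (fun x => f x = j)).card))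
  let bad2 : (U → Fin d1) → Finset (Fin d1 × Fin d2 → U → Fin d3) := fun f =>
    Finset.univ.biUnion (fun j : Fin d1 => P.filter (fun F => ∀ i, F (j, i) ∈
      Hfam'.filter (fun h => ¬ Set.InjOn h (sz f j : Set U))))
  have hbad1 : (bad1.card : ℝ) ≤ 2 / ((k : ℝ) ^ 3 * L) * Hfam.card := by
    have h1 : (bad1.card : ℝ) ≤ ∑ j : Fin d1,
        ((Hfam.filter (fun f => κ ≤ (S.filter (fun x => f x = j)).card)).card : ℝ) := by
      exact_mod_cast Finset.card_biUnion_le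
    refine h1.trans ?_
    calc _ ≤ ∑ j : Fin d1, (Real.exp (-(4 * L)) * Hfam.card) := by
          refine Finset.sum_le_sum fun j _ => ?_
          have h2 := aux_bucket Hfam hHindep S j
          rw [hS] at h2
          have h3 : ((Hfam.filter (fun f => κ ≤ (S.filter (fun x => f x = j)).card)).card : ℝ)
            * (d1 : ℝ) ^ κ ≤ k.choose κ * Hfam.card := by exact_mod_cast h2
          rw [← le_div_iff₀ (by positivity)] at h3
          refine h3.trans ?_
          rw [mul_div_right_comm]
          gcongr
          exact aux_num hL hDpos (by rw [hD]; exact hdhigh) hκ1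
      _ = d1 * Real.exp (-(4 * L)) * Hfam.card := by
          rw [Finset.sum_const, Finset.card_univ, Fintype.card_fin, nsmul_eq_mul, mul_assoc]
      _ ≤ _ := by gcongr
  have hbad2 : ∀ f ∈ Hfam \ bad1, ((bad2 f).card : ℝ) ≤ 2 / ((k : ℝ) ^ 3 * L) * N := by
    intro f hf
    rw [Finset.mem_sdiff] at hf
    have hsm : ∀ j, (sz f j).card ^ 2 ≤ d3 := by
      intro j
      have h1 : (sz f j).card < κ := by
        by_contra hcon
        push Not at hcon
        exact hf.2 (Finset.mem_biUnion.2 ⟨j, Finset.mem_univ _, Finset.mem_filter.2 ⟨hf.1, hcon⟩⟩)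
      have h2 : ((sz f j).card : ℝ) < 12 * L := Nat.lt_ceil.1 h1
      have h3 : ((sz f j).card : ℝ) ^ 2 ≤ d3 := by
        refine le_trans ?_ hd3'
        gcongr
        linarith
      exact_mod_cast h3
    have h1 : ((bad2 f).card : ℝ) ≤ ∑ j : Fin d1, ((P.filter (fun F => ∀ i, F (j, i) ∈
      Hfam'.filter (fun h => ¬ Set.InjOn h (sz f j : Set U)))).card : ℝ) := by
      exact_mod_cast Finset.card_biUnion_le
    refine h1.trans ?_
    calc _ ≤ ∑ j : Fin d1, (Real.exp (-(4 * L)) * N) := by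
          refine Finset.sum_le_sum fun j _ => ?_
          have hr := aux_row (d2 := d2) Hfam' _ (aux_coll Hfam' hH'univ (sz f j) (hsm j) hd3pos) j
          refine le_trans (le_of_eq ?_) (hr.trans ?_)
          · congr!
          gcongr
          exact aux_num2 hL h8
      _ = d1 * Real.exp (-(4 * L)) * N := by
          rw [Finset.sum_const, Finset.card_univ, Fintype.card_fin, nsmul_eq_mul, mul_assoc]
      _ ≤ _ := by gcongr
  set good := (Hfam ×ˢ P).filter
        (fun fF : (U → Fin d1) × (Fin d1 × Fin d2 → U → Fin d3) =>
          ∃ ι : Fin k → ℕ, Function.Injective ι ∧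
            (∀ j : Fin k, ι j < d1 * d2 * d3) ∧
            (∀ j : Fin k, ∃! x : U, x ∈ S ∧ x ∈ Tset fF.1 fF.2 (ι j)) ∧
            (∀ x ∈ S, ∃ j : Fin k, x ∈ Tset fF.1 fF.2 (ι j)) ∧
            (∀ j l : Fin k, j ≠ l →
              Tset fF.1 fF.2 (ι j) ∩ Tset fF.1 fF.2 (ι l) = ∅)) with hgood
  let B2 := (Hfam \ bad1).biUnion (fun f => (bad2 f).image (fun F => (f, F)))
  have hcover : Hfam ×ˢ P ⊆ good ∪ (bad1 ×ˢ P ∪ B2) := by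
    rintro ⟨f, F⟩ hfF
    obtain ⟨hf, hF⟩ := Finset.mem_product.1 hfF
    simp only at hf hF
    by_cases hb : f ∈ bad1
    · exact Finset.mem_union_right _ (Finset.mem_union_left _ (Finset.mem_product.2 ⟨hb, hF⟩))
    by_cases hg : ∀ j : Fin d1, ∃ i : Fin d2, Set.InjOn (F (j, i)) (sz f j : Set U)
    · refine Finset.mem_union_left _ (Finset.mem_filter.2 ⟨hfF, aux_good f F S hS ?_⟩)
      intro j
      obtain ⟨i, hi⟩ := hg j
      exact ⟨i, by convert hi⟩
    · push Not at hg
      obtain ⟨j, hj⟩ := hg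
      refine Finset.mem_union_right _ (Finset.mem_union_right _ (Finset.mem_biUnion.2
        ⟨f, Finset.mem_sdiff.2 ⟨hf, hb⟩, Finset.mem_image.2 ⟨F, ?_, rfl⟩⟩))
      refine Finset.mem_biUnion.2 ⟨j, Finset.mem_univ _, Finset.mem_filter.2 ⟨hF, fun i => ?_⟩⟩
      exact Finset.mem_filter.2 ⟨Fintype.mem_piFinset.1 hF (j, i), hj i⟩
  have hB2 : (B2.card : ℝ) ≤ 2 / ((k : ℝ) ^ 3 * L) * (Hfam.card * N) := by
    have h1 : (B2.card : ℝ) ≤ ∑ f ∈ Hfam \ bad1, (((bad2 f).image (fun F => (f, F))).card : ℝ) := by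
      exact_mod_cast Finset.card_biUnion_le
    refine h1.trans ?_
    calc _ ≤ ∑ f ∈ Hfam \ bad1, (2 / ((k : ℝ) ^ 3 * L) * N) := by
          refine Finset.sum_le_sum fun f hf => le_trans ?_ (hbad2 f hf)
          exact_mod_cast Finset.card_image_le
      _ = ((Hfam \ bad1).card : ℝ) * (2 / ((k : ℝ) ^ 3 * L) * N) := by
          rw [Finset.sum_const, nsmul_eq_mul]
      _ ≤ (Hfam.card : ℝ) * (2 / ((k : ℝ) ^ 3 * L) * N) := by
          gcongr
          exact Finset.sdiff_subset
      _ = _ := by ring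
  have hfin : ((Hfam ×ˢ P).card : ℝ) ≤ good.card + ((bad1 ×ˢ P).card + B2.card) := by
    have h1 := Finset.card_le_card hcover
    have h2 := Finset.card_union_le good (bad1 ×ˢ P ∪ B2)
    have h3 := Finset.card_union_le (bad1 ×ˢ P) B2
    have : (Hfam ×ˢ P).card ≤ good.card + ((bad1 ×ˢ P).card + B2.card) := by omega
    exact_mod_cast this
  rw [Finset.card_product, Finset.card_product] at hfin
  push_cast at hfin
  rw [hPc] at hfin
  have h5 : (bad1.card : ℝ) * N ≤ 2 / ((k : ℝ) ^ 3 * L) * Hfam.card * N := by gcongr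
  have h6 : (4 : ℝ) / ((k : ℝ) ^ 3 * L) = 2 / ((k : ℝ) ^ 3 * L) + 2 / ((k : ℝ) ^ 3 * L) := by ring
  rw [h6]
  linarith
end

section
/- Let U be a finite set and k ≥ 2 an integer with k ≤ |U|. Let d be the unique positive integer with 2^{d-1} < k/ln k ≤ 2^d, and set d1 = 2^d. Let H be a ⌈12 ln k⌉-wise independent family of functions from U to {0,...,d1-1}. Then for every subset S ⊆ U of cardinality k, for f chosen uniformly at random from H, the probability that there exists some j ∈ {0,...,d1-1} with |{ y ∈ S : f(y) = j }| ≥ 13 ln k is at most 2/(k³ ln k); equivalently, with probability at least 1 - 2/(k³ ln k), every j ∈ {0,...,d1-1} satisfies |{ y ∈ S : f(y) = j }| < 13 ln k. -/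
open Finset

/- **Statement 3.** Let `U` be finite, `2 ≤ k ≤ |U|`, `d` the positive integer
with `2^(d-1) < k/ln k ≤ 2^d`, and `d1 = 2^d`.  Let `Hfam` be a
`⌈12 ln k⌉`-wise independent family of functions `U → Fin d1`.  Then for every
`S ⊆ U` with `|S| = k`, for `f` chosen uniformly from `Hfam`, the probability
that some `j` has `|{y ∈ S : f y = j}| ≥ 13 ln k` is at most `2/(k³ ln k)`. -/
open Classical in
theorem stmt3 {U : Type*} [Fintype U] [DecidableEq U]
    (k : ℕ) (hk : 2 ≤ k) (hkU : k ≤ Fintype.card U)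
    (d : ℕ) (hd : 0 < d)
    (hdlow : (2 : ℝ) ^ (d - 1) < (k : ℝ) / Real.log k)
    (hdhigh : (k : ℝ) / Real.log k ≤ (2 : ℝ) ^ d)
    (d1 : ℕ) (hd1 : d1 = 2 ^ d)
    (Hfam : Finset (U → Fin d1)) (hHne : Hfam.Nonempty)
    (hHindep : ∀ x : Fin ⌈(12 : ℝ) * Real.log k⌉₊ → U, Function.Injective x →
      ∀ a : Fin ⌈(12 : ℝ) * Real.log k⌉₊ → Fin d1,
        (Hfam.filter (fun h => ∀ l, h (x l) = a l)).card *
            d1 ^ (⌈(12 : ℝ) * Real.log k⌉₊ : ℕ) = Hfam.card)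
    (S : Finset U) (hS : S.card = k) :
    (((Hfam.filter (fun f => ∃ j : Fin d1,
        (13 : ℝ) * Real.log k ≤ ((S.filter (fun y => f y = j)).card : ℝ))).card : ℝ))
      ≤ (2 / ((k : ℝ) ^ 3 * Real.log k)) * (Hfam.card : ℝ) := by
  have hk0 : (0 : ℝ) < k := by positivity
  have hk2 : (2 : ℝ) ≤ k := by exact_mod_cast hk
  have hL : 0 < Real.log k := Real.log_pos (by linarith)
  set L := Real.log k with hLdef
  set κ := ⌈(12 : ℝ) * L⌉₊ with hκ
  have hκge : 12 * L ≤ κ := Nat.le_ceil _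
  have hκlt : (κ : ℝ) < 12 * L + 1 := Nat.ceil_lt_add_one (by positivity)
  have hdpos : 0 < d1 := by rw [hd1]; positivity
  have hD0 : (0 : ℝ) < d1 := by exact_mod_cast hdpos
  have hD : (d1 : ℝ) = 2 ^ d := by rw [hd1]; push_cast; rfl
  have hDup : (d1 : ℝ) ≤ 2 * k / L := by
    obtain ⟨e, rfl⟩ := Nat.exists_eq_succ_of_ne_zero hd.ne'
    simp only [Nat.succ_eq_add_one, Nat.add_sub_cancel] at hdlow hD
    rw [hD, pow_succ, mul_div_assoc]
    linarith
  have hDlow : (k : ℝ) / d1 ≤ L := by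
    rw [← hD, div_le_iff₀ hL] at hdhigh
    rw [div_le_iff₀ hD0]
    linarith
  have hH0 : (0 : ℝ) ≤ Hfam.card := by positivity
  -- a loaded bin contains at least κ keys
  have hload : ∀ m : ℕ, m ≤ k → 13 * L ≤ (m : ℝ) → κ ≤ m := by
    intro m hm h
    have hmk : (m : ℝ) ≤ k := by exact_mod_cast hm
    have hL1 : 1 ≤ L := by
      rcases hk.eq_or_lt with h2 | h3
      · exfalso
        have : L = Real.log 2 := by rw [hLdef, ← h2]; norm_num
        have h4 := Real.log_two_gt_d9
        have : (k : ℝ) = 2 := by rw [← h2]; norm_num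
        linarith
      · rw [hLdef, Real.le_log_iff_exp_le hk0]
        have h3' : (3 : ℝ) ≤ k := by exact_mod_cast h3
        have := Real.exp_one_lt_d9
        linarith
    have : (κ : ℝ) ≤ m := by linarith
    exact_mod_cast this
  -- probability for a fixed set of keys
  have hT : ∀ T ∈ S.powersetCard κ, ∀ j : Fin d1,
      ((Hfam.filter (fun f => ∀ y ∈ T, f y = j)).card : ℝ) = Hfam.card / (d1 : ℝ) ^ κ := by
    intro T hT j
    have hc : T.card = κ := (Finset.mem_powersetCard.1 hT).2
    let e := (T.equivFinOfCardEq hc).symm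
    have h := hHindep (fun l => (e l : U))
      (Subtype.val_injective.comp e.injective) (fun _ => j)
    have heq : Hfam.filter (fun f => ∀ y ∈ T, f y = j)
        = Hfam.filter (fun f => ∀ l, f (e l : U) = j) := by
      apply Finset.filter_congr
      intro f _
      constructor
      · intro hf l
        exact hf _ (e l).2
      · intro hf y hy
        have := hf (e.symm ⟨y, hy⟩)
        simpa using this
    rw [heq, eq_div_iff (by positivity)]
    exact_mod_cast h
  -- union bound
  have hunion : ((Hfam.filter (fun f => ∃ j : Fin d1,
        (13 : ℝ) * L ≤ ((S.filter (fun y => f y = j)).card : ℝ))).card : ℝ)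
      ≤ d1 * (k.choose κ * (Hfam.card / (d1 : ℝ) ^ κ)) := by
    have hsub : Hfam.filter (fun f => ∃ j : Fin d1,
        (13 : ℝ) * L ≤ ((S.filter (fun y => f y = j)).card : ℝ)) ⊆
        (Finset.univ : Finset (Fin d1)).biUnion (fun j => (S.powersetCard κ).biUnion
          (fun T => Hfam.filter (fun f => ∀ y ∈ T, f y = j))) := by
      intro f hf
      obtain ⟨hfH, j, hj⟩ := Finset.mem_filter.1 hf
      have h1 := hload _ ((Finset.card_filter_le _ _).trans hS.le) hj
      obtain ⟨T, hTs, hTc⟩ := Finset.exists_subset_card_eq h1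
      simp only [Finset.mem_biUnion, Finset.mem_univ, true_and, Finset.mem_filter,
        Finset.mem_powersetCard]
      exact ⟨j, T, ⟨hTs.trans (Finset.filter_subset _ _), hTc⟩, hfH,
        fun y hy => (Finset.mem_filter.1 (hTs hy)).2⟩
    have h2 := (Finset.card_le_card hsub).trans (Finset.card_biUnion_le.trans
      (Finset.sum_le_sum (fun j _ => Finset.card_biUnion_le)))
    refine (Nat.cast_le (α := ℝ).2 h2).trans (le_of_eq ?_)
    push_cast
    rw [Finset.sum_congr rfl (fun j _ => Finset.sum_congr rfl (fun T hTm => hT T hTm j))]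
    simp [Finset.card_powersetCard, hS]
  -- numeric estimate
  have hnum : (k.choose κ : ℝ) / (d1 : ℝ) ^ κ ≤ 1 / (k : ℝ) ^ 4 := by
    have h1 : (k.choose κ : ℝ) ≤ (k : ℝ) ^ κ / κ.factorial := Nat.choose_le_pow_div κ k
    have h2 : (12 * L) ^ κ / κ.factorial ≤ Real.exp (12 * L) :=
      Real.pow_div_factorial_le_exp _ (by positivity) _
    have hexpL : Real.exp L = k := Real.exp_log hk0
    have h3 : Real.exp (24 * L) ≤ (12 : ℝ) ^ κ := by
      have h12 : Real.exp 2 ≤ 12 := by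
        have h5 := Real.exp_one_lt_d9
        have h6 := Real.exp_pos 1
        have : Real.exp 2 = Real.exp 1 * Real.exp 1 := by rw [← Real.exp_add]; norm_num
        rw [this]; nlinarith
      calc Real.exp (24 * L) ≤ Real.exp (κ * 2) := Real.exp_le_exp.2 (by linarith)
        _ = Real.exp 2 ^ κ := Real.exp_nat_mul _ _
        _ ≤ 12 ^ κ := by gcongr
    have hf : (0 : ℝ) < κ.factorial := by positivity
    calc (k.choose κ : ℝ) / (d1 : ℝ) ^ κ
        ≤ ((k : ℝ) ^ κ / κ.factorial) / (d1 : ℝ) ^ κ := by gcongr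
      _ = ((k : ℝ) / d1) ^ κ / κ.factorial := by rw [div_pow]; field_simp
      _ ≤ L ^ κ / κ.factorial := by gcongr
      _ = ((12 * L) ^ κ / κ.factorial) / 12 ^ κ := by rw [mul_pow]; field_simp
      _ ≤ Real.exp (12 * L) / Real.exp (24 * L) := by gcongr
      _ = Real.exp (-(12 * L)) := by rw [← Real.exp_sub]; congr 1; ring
      _ ≤ Real.exp (-(4 * L)) := Real.exp_le_exp.2 (by linarith)
      _ = 1 / (k : ℝ) ^ 4 := by
        rw [Real.exp_neg, one_div, ← hexpL, ← Real.exp_nat_mul]; norm_num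
  calc _ ≤ d1 * (k.choose κ * (Hfam.card / (d1 : ℝ) ^ κ)) := hunion
    _ = d1 * ((k.choose κ : ℝ) / (d1 : ℝ) ^ κ) * Hfam.card := by ring
    _ ≤ (2 * k / L) * (1 / (k : ℝ) ^ 4) * Hfam.card := by gcongr
    _ = _ := by field_simp
end

section
/- Let U be a finite set, k ≥ 2 an integer, r = ⌈13 ln k⌉², and m = ⌈8 ln k⌉. Let H' be a universal family of functions from U to {0,...,r-1}. Then for every subset S' ⊆ U with |S'| ≤ 13 ln k, the number of m-tuples (f_1, ..., f_m) ∈ (H')^m such that no component f_l is injective on S' is strictly less than |H'|^m / k⁴; equivalently, if f_1,...,f_m are chosen independently and uniformly at random from H', then with probability greater than 1 - 1/k⁴ at least one f_l is injective on S'. -/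
open Finset

/- **Statement 4.** Let `U` be finite, `k ≥ 2`, `r = ⌈13 ln k⌉²`,
`m = ⌈8 ln k⌉`, and let `Hfam'` be a universal family of functions
`U → Fin r`.  Then for every `S' ⊆ U` with `|S'| ≤ 13 ln k`, the number of
`m`-tuples `(f_1, …, f_m) ∈ (Hfam')^m` in which no component is injective on
`S'` is strictly less than `|Hfam'|^m / k⁴`. -/
open Classical in
theorem stmt4 {U : Type*} [Fintype U] [DecidableEq U]
    (k : ℕ) (hk : 2 ≤ k)
    (r m : ℕ) (hr : r = ⌈(13 : ℝ) * Real.log k⌉₊ ^ 2)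
    (hm : m = ⌈(8 : ℝ) * Real.log k⌉₊)
    (Hfam' : Finset (U → Fin r)) (hH'ne : Hfam'.Nonempty)
    (hH'univ : ∀ x y : U, x ≠ y →
      (Hfam'.filter (fun h => h x = h y)).card * r ≤ Hfam'.card)
    (S' : Finset U) (hS' : (S'.card : ℝ) ≤ 13 * Real.log k) :
    (((Fintype.piFinset (fun _ : Fin m => Hfam')).filter
        (fun F : Fin m → U → Fin r =>
          ∀ l : Fin m, ¬ Set.InjOn (F l) ↑S')).card : ℝ) * (k : ℝ) ^ 4
      < (Hfam'.card : ℝ) ^ m := by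
  have hlog : 0 < Real.log k := Real.log_pos (by exact_mod_cast (by omega : 1 < k))
  have hNpos : 0 < Hfam'.card := hH'ne.card_pos
  have hsle : S'.card ≤ ⌈(13 : ℝ) * Real.log k⌉₊ := by
    exact_mod_cast hS'.trans (Nat.le_ceil _)
  have hrpos : 0 < r := by
    rw [hr]
    have : 0 < ⌈(13 : ℝ) * Real.log k⌉₊ := Nat.ceil_pos.mpr (by positivity)
    positivity
  have hoff : S'.offDiag.card ≤ r := by
    rw [Finset.offDiag_card, hr]
    have : S'.card * S'.card ≤ ⌈(13 : ℝ) * Real.log k⌉₊ ^ 2 := by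
      rw [pow_two]
      exact Nat.mul_le_mul hsle hsle
    omega
  set bad := Hfam'.filter (fun h : U → Fin r => ¬ Set.InjOn h ↑S') with hbad
  have h1 : bad.card * 2 ≤ ∑ h ∈ bad, (S'.offDiag.filter (fun p => h p.1 = h p.2)).card := by
    rw [← smul_eq_mul]
    apply Finset.card_nsmul_le_sum
    intro h hh
    have hni := (Finset.mem_filter.mp hh).2
    simp only [Set.InjOn] at hni
    push Not at hni
    obtain ⟨x, hx, y, hy, hxy, hne⟩ := hni
    have hx' : x ∈ S' := by simpa using hx
    have hy' : y ∈ S' := by simpa using hy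
    have hsub : ({(x, y), (y, x)} : Finset (U × U)) ⊆
        S'.offDiag.filter (fun p => h p.1 = h p.2) := by
      intro p hp
      simp only [Finset.mem_insert, Finset.mem_singleton] at hp
      rw [Finset.mem_filter, Finset.mem_offDiag]
      rcases hp with rfl | rfl
      · exact ⟨⟨hx', hy', hne⟩, hxy⟩
      · exact ⟨⟨hy', hx', hne.symm⟩, hxy.symm⟩
    have hc : ({(x, y), (y, x)} : Finset (U × U)).card = 2 := by
      apply Finset.card_pair
      intro he
      exact hne (Prod.mk.inj he).1
    rw [← hc]
    exact Finset.card_le_card hsub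
  have h2 : ∑ h ∈ bad, (S'.offDiag.filter (fun p => h p.1 = h p.2)).card
      ≤ ∑ h ∈ Hfam', (S'.offDiag.filter (fun p => h p.1 = h p.2)).card :=
    Finset.sum_le_sum_of_subset (Finset.filter_subset _ _)
  have h3 : ∑ h ∈ Hfam', (S'.offDiag.filter (fun p => h p.1 = h p.2)).card
      = ∑ p ∈ S'.offDiag, (Hfam'.filter (fun h => h p.1 = h p.2)).card := by
    simp only [Finset.card_filter]
    exact Finset.sum_comm
  have h4 : (∑ p ∈ S'.offDiag, (Hfam'.filter (fun h => h p.1 = h p.2)).card) * r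
      ≤ S'.offDiag.card * Hfam'.card := by
    rw [Finset.sum_mul, ← smul_eq_mul (S'.offDiag.card)]
    apply Finset.sum_le_card_nsmul
    intro p hp
    have := hH'univ p.1 p.2 (Finset.mem_offDiag.mp hp).2.2
    convert this
  have h5 : bad.card * 2 ≤ Hfam'.card := by
    have : (bad.card * 2) * r ≤ Hfam'.card * r :=
      calc (bad.card * 2) * r ≤ _ := Nat.mul_le_mul_right r (h1.trans (h2.trans h3.le))
        _ ≤ _ := h4
        _ ≤ r * Hfam'.card := Nat.mul_le_mul_right _ hoff
        _ = _ := Nat.mul_comm _ _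
    exact Nat.le_of_mul_le_mul_right this hrpos
  have h6 : (Fintype.piFinset (fun _ : Fin m => Hfam')).filter
        (fun F : Fin m → U → Fin r => ∀ l : Fin m, ¬ Set.InjOn (F l) ↑S')
      = Fintype.piFinset (fun _ : Fin m => bad) := by
    ext F
    simp only [Finset.mem_filter, Fintype.mem_piFinset, hbad]
    exact forall_and.symm
  have hcard : ((Fintype.piFinset (fun _ : Fin m => Hfam')).filter
        (fun F : Fin m → U → Fin r => ∀ l : Fin m, ¬ Set.InjOn (F l) ↑S')).card
      = bad.card ^ m := by
    rw [h6, Fintype.card_piFinset]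
    simp
  have hk0 : (0 : ℝ) < k := by exact_mod_cast (by omega : 0 < k)
  have h7 : (k : ℝ) ^ 4 < 2 ^ m := by
    apply (Real.log_lt_log_iff (by positivity) (by positivity)).mp
    rw [Real.log_pow, Real.log_pow]
    have hmge : 8 * Real.log k ≤ (m : ℝ) := by
      rw [hm]
      exact Nat.le_ceil _
    have hl2 := Real.log_two_gt_d9
    push_cast
    nlinarith
  have h8 : (bad.card : ℝ) * 2 ≤ Hfam'.card := by exact_mod_cast h5
  have hN : (0 : ℝ) < Hfam'.card := by exact_mod_cast hNpos
  have main : ((bad.card ^ m : ℕ) : ℝ) * (k : ℝ) ^ 4 < (Hfam'.card : ℝ) ^ m := by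
    push_cast
    rcases Nat.eq_zero_or_pos bad.card with h0 | h0
    · have hm0 : m ≠ 0 := by
        rw [hm]
        exact (Nat.ceil_pos.mpr (by positivity)).ne'
      rw [h0]
      simp only [Nat.cast_zero, zero_pow hm0, zero_mul]
      positivity
    · have hb : (0 : ℝ) < bad.card := by exact_mod_cast h0
      calc (bad.card : ℝ) ^ m * (k : ℝ) ^ 4 < (bad.card : ℝ) ^ m * 2 ^ m :=
            mul_lt_mul_of_pos_left h7 (by positivity)
        _ = ((bad.card : ℝ) * 2) ^ m := (mul_pow _ _ _).symm
        _ ≤ _ := pow_le_pow_left₀ (by positivity) h8 m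
  rw [← hcard] at main
  convert main
end

section
/- Let d1, d2, d3 be positive integers, U a finite set, f : U → {0,...,d1-1} a function, and for each j ∈ {0,...,d1-1} let F_j = (h_{j,1}, ..., h_{j,d2}) be a sequence of d2 functions from U to {0,...,d3-1}. Let S ⊆ U with |S| = k, and for j ∈ {0,...,d1-1} let S_j = { x ∈ S : f(x) = j }. Suppose that for every j ∈ {0,...,d1-1} there is an index η(j) ∈ {1,...,d2} such that h_{j,η(j)} is injective on S_j. Define B = { g(f(x), η(f(x)), x) : x ∈ S }. Then: (1) B has exactly k elements; (2) for every a ∈ B, |T_a ∩ S| = 1; (3) S ⊆ ∪_{a ∈ B} T_a; and (4) T_a ∩ T_b = ∅ for all distinct a, b ∈ B. -/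
open Finset

/-- Uniqueness of quotient and remainder. -/
lemma quot_rem_aux {d a b r s : ℕ} (hr : r < d) (hs : s < d)
    (e : a * d + r = b * d + s) : a = b ∧ r = s := by
  have hab : a = b := by
    rcases lt_trichotomy a b with hlt | heq | hlt
    · have := Nat.mul_le_mul_right d hlt
      rw [Nat.succ_mul] at this
      omega
    · exact heq
    · have := Nat.mul_le_mul_right d hlt
      rw [Nat.succ_mul] at this
      omega
  subst hab
  exact ⟨rfl, by omega⟩

/- **Statement 5.** Let `d1, d2, d3` be positive, `U` finite,
`f : U → Fin d1`, and `h j i : U → Fin d3` for `j : Fin d1`, `i : Fin d2`.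
Let `S ⊆ U` with `|S| = k`, `S_j = {x ∈ S : f x = j}`, and suppose that for
every `j` there is an index `η j` such that `h j (η j)` is injective on `S_j`.
With `g j i x = j·d2·d3 + i·d3 + h j i x`, `T a = {x | ∃ i, a = g (f x) i x}`
and `B = { g (f x) (η (f x)) x : x ∈ S }`: `B` has exactly `k` elements, each
`T a` (`a ∈ B`) meets `S` in exactly one element, `S ⊆ ⋃_{a ∈ B} T a`, and the
`T a` for `a ∈ B` are pairwise disjoint. -/
theorem stmt5 (d1 d2 d3 : ℕ) (hd1 : 0 < d1) (hd2 : 0 < d2) (hd3 : 0 < d3)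
    {U : Type*} [Fintype U] [DecidableEq U]
    (f : U → Fin d1) (h : Fin d1 → Fin d2 → U → Fin d3)
    (k : ℕ) (S : Finset U) (hS : S.card = k)
    (η : Fin d1 → Fin d2)
    (hinj : ∀ j : Fin d1, Set.InjOn (h j (η j)) {x : U | x ∈ S ∧ f x = j})
    (g : Fin d1 → Fin d2 → U → ℕ)
    (hg : ∀ (j : Fin d1) (i : Fin d2) (x : U),
      g j i x = (j : ℕ) * d2 * d3 + (i : ℕ) * d3 + (h j i x : ℕ))
    (T : ℕ → Set U)
    (hT : ∀ a : ℕ, T a = {x : U | ∃ i : Fin d2, a = g (f x) i x})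
    (B : Finset ℕ) (hB : B = S.image (fun x => g (f x) (η (f x)) x)) :
    B.card = k ∧
    (∀ a ∈ B, ∃! x : U, x ∈ S ∧ x ∈ T a) ∧
    (∀ x ∈ S, ∃ a ∈ B, x ∈ T a) ∧
    (∀ a ∈ B, ∀ b ∈ B, a ≠ b → T a ∩ T b = ∅) := by
  have key : ∀ j i x j' i' y, g j i x = g j' i' y →
      j = j' ∧ i = i' ∧ h j i x = h j' i' y := by
    intro j i x j' i' y e
    rw [hg, hg, ← Nat.add_mul, ← Nat.add_mul] at e
    obtain ⟨e1, e2⟩ := quot_rem_aux (h j i x).isLt (h j' i' y).isLt e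
    obtain ⟨e3, e4⟩ := quot_rem_aux i.isLt i'.isLt e1
    exact ⟨Fin.ext e3, Fin.ext e4, Fin.ext e2⟩
  have inj : ∀ x ∈ S, ∀ y ∈ S, ∀ i,
      g (f x) (η (f x)) x = g (f y) i y → x = y := by
    intro x hx y hy i e
    obtain ⟨e1, e2, e3⟩ := key _ _ _ _ _ _ e
    rw [← e2, ← e1] at e3
    exact hinj (f x) ⟨hx, rfl⟩ ⟨hy, e1.symm⟩ e3
  subst hB
  refine ⟨?_, ?_, ?_, ?_⟩
  · rw [Finset.card_image_of_injOn, hS]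
    intro x hx y hy e
    exact inj x hx y hy _ e
  · intro a ha
    obtain ⟨x, hx, rfl⟩ := Finset.mem_image.1 ha
    refine ⟨x, ⟨hx, ?_⟩, ?_⟩
    · rw [hT]
      exact ⟨_, rfl⟩
    · rintro y ⟨hy, hyT⟩
      rw [hT] at hyT
      obtain ⟨i, e⟩ := hyT
      exact (inj x hx y hy i e).symm
  · intro x hx
    refine ⟨_, Finset.mem_image_of_mem _ hx, ?_⟩
    rw [hT]
    exact ⟨_, rfl⟩
  · intro a ha b hb hab
    obtain ⟨x, hx, rfl⟩ := Finset.mem_image.1 ha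
    obtain ⟨y, hy, rfl⟩ := Finset.mem_image.1 hb
    rw [Set.eq_empty_iff_forall_notMem]
    rintro z ⟨hz1, hz2⟩
    rw [hT] at hz1 hz2
    obtain ⟨i, e⟩ := hz1
    obtain ⟨i', e'⟩ := hz2
    obtain ⟨a1, a2, -⟩ := key _ _ _ _ _ _ e
    obtain ⟨b1, b2, -⟩ := key _ _ _ _ _ _ e'
    apply hab
    have hi : i = i' := by rw [← a2, ← b2, a1, b1]
    exact e.trans (hi ▸ e'.symm)
end

section
/- Let G be a simple graph on vertex set V = {0,...,n-1} with edge weights wt : E(G) → ℝ≥0, let k ≥ 1, let f : V → {0,...,4k²-1}, and let H be a subgraph of G. Then Compact(H,f) has a nice k-matching (with respect to f) if and only if Red-Com(H,f) has a nice k-matching. Moreover, if Compact(H,f) (and hence Red-Com(H,f)) has a nice k-matching, then the maximum weight of a nice k-matching in Compact(H,f) equals the maximum weight of a nice k-matching in Red-Com(H,f). -/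
open Finset
open Classical

/-- An edge is a pair `(u, v)` of vertices with `u < v`.  A set `M` of edges
is a matching if no two distinct edges of `M` share an endpoint. -/
def IsMatchingE (M : Finset (ℕ × ℕ)) : Prop :=
  ∀ e ∈ M, ∀ e' ∈ M, e ≠ e' →
    e.1 ≠ e'.1 ∧ e.1 ≠ e'.2 ∧ e.2 ≠ e'.1 ∧ e.2 ≠ e'.2

/-- `M` is a `k`-matching of the graph with edge set `H`. -/
def IsKMatchingE (H M : Finset (ℕ × ℕ)) (k : ℕ) : Prop :=
  M ⊆ H ∧ M.card = k ∧ IsMatchingE M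

/-- The weight of a set of edges. -/
noncomputable def mweight (wt : ℕ × ℕ → ℝ) (M : Finset (ℕ × ℕ)) : ℝ :=
  ∑ e ∈ M, wt e

/-- The set of vertices covered by a set of edges. -/
def coveredE (M : Finset (ℕ × ℕ)) : Set ℕ := {v | ∃ e ∈ M, v = e.1 ∨ v = e.2}

/-- A matching is nice w.r.t. `f` if no two covered vertices lie in the same
part (preimage of a value of `f`). -/
def NiceE (f : ℕ → ℕ) (M : Finset (ℕ × ℕ)) : Prop := Set.InjOn f (coveredE M)

/-- The strict order `≺` on edges: `e ≺ e'` iff `β e = (wt e, e.1, e.2)` is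
lexicographically smaller than `β e'`. -/
def edgeLT (wt : ℕ × ℕ → ℝ) (e e' : ℕ × ℕ) : Prop :=
  wt e < wt e' ∨ (wt e = wt e' ∧ (e.1 < e'.1 ∨ (e.1 = e'.1 ∧ e.2 < e'.2)))

/-- `CompactG wt f H` : the subgraph of `H` consisting of every edge whose
endpoints lie in distinct parts of `f` and whose `β`-value is maximum among
the edges of `H` between those two parts. -/
noncomputable def CompactG (wt : ℕ × ℕ → ℝ) (f : ℕ → ℕ)
    (H : Finset (ℕ × ℕ)) : Finset (ℕ × ℕ) :=
  H.filter (fun e => f e.1 ≠ f e.2 ∧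
    ∀ e' ∈ H, ({f e'.1, f e'.2} : Finset ℕ) = {f e.1, f e.2} → ¬ edgeLT wt e e')

/-- `RedComG wt f k H` : from `CompactG wt f H` keep each edge that is among
the `8k` `β`-heaviest edges incident to (vertices of) the part of each of its
endpoints, and then keep only the `q = k(16k-1)` `β`-heaviest of those. -/
noncomputable def RedComG (wt : ℕ × ℕ → ℝ) (f : ℕ → ℕ) (k : ℕ)
    (H : Finset (ℕ × ℕ)) : Finset (ℕ × ℕ) :=
  let C := CompactG wt f H
  let R1 := C.filter (fun e =>
    (C.filter (fun e' => (f e'.1 = f e.1 ∨ f e'.2 = f e.1) ∧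
      edgeLT wt e e')).card < 8 * k ∧
    (C.filter (fun e' => (f e'.1 = f e.2 ∨ f e'.2 = f e.2) ∧
      edgeLT wt e e')).card < 8 * k)
  R1.filter (fun e => (R1.filter (fun e' => edgeLT wt e e')).card < k * (16 * k - 1))

lemma elt_irrefl (wt : ℕ × ℕ → ℝ) (e : ℕ × ℕ) : ¬ edgeLT wt e e := by
  unfold edgeLT; simp

lemma elt_trans (wt : ℕ × ℕ → ℝ) {a b c : ℕ × ℕ} (h1 : edgeLT wt a b) (h2 : edgeLT wt b c) :
    edgeLT wt a c := by
  unfold edgeLT at *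
  rcases h1 with h1 | ⟨h1, h1'⟩ <;> rcases h2 with h2 | ⟨h2, h2'⟩
  · left; linarith
  · left; linarith
  · left; linarith
  · right; exact ⟨h1.trans h2, by omega⟩

lemma elt_total (wt : ℕ × ℕ → ℝ) {a b : ℕ × ℕ} (h : a ≠ b) : edgeLT wt a b ∨ edgeLT wt b a := by
  unfold edgeLT
  rcases lt_trichotomy (wt a) (wt b) with h1 | h1 | h1
  · exact Or.inl (Or.inl h1)
  · have : a.1 ≠ b.1 ∨ a.2 ≠ b.2 := by
      by_contra hc
      push Not at hc
      exact h (Prod.ext hc.1 hc.2)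
    have h2 : (a.1 < b.1 ∨ (a.1 = b.1 ∧ a.2 < b.2)) ∨ (b.1 < a.1 ∨ (b.1 = a.1 ∧ b.2 < a.2)) := by
      omega
    rcases h2 with h2 | h2
    · exact Or.inl (Or.inr ⟨h1, h2⟩)
    · exact Or.inr (Or.inr ⟨h1.symm, h2⟩)
  · exact Or.inr (Or.inl h1)

lemma elt_le (wt : ℕ × ℕ → ℝ) {a b : ℕ × ℕ} (h : edgeLT wt a b) : wt a ≤ wt b := by
  rcases h with h | h
  · exact h.le
  · exact h.1.le

/-- the number of edges of `S` below `e` -/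
noncomputable def rk (wt : ℕ × ℕ → ℝ) (S : Finset (ℕ × ℕ)) (e : ℕ × ℕ) : ℕ :=
  (S.filter (fun e' => edgeLT wt e' e)).card

lemma rk_lt (wt : ℕ × ℕ → ℝ) (S : Finset (ℕ × ℕ)) {a b : ℕ × ℕ} (ha : a ∈ S)
    (h : edgeLT wt a b) : rk wt S a < rk wt S b := by
  apply Finset.card_lt_card
  rw [Finset.ssubset_iff_of_subset]
  · exact ⟨a, by simp [ha, h], by simp [elt_irrefl]⟩
  · intro x hx
    simp only [Finset.mem_filter] at hx ⊢
    exact ⟨hx.1, elt_trans wt hx.2 h⟩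

lemma card_le_of_top (wt : ℕ × ℕ → ℝ) (S : Finset (ℕ × ℕ)) (m : ℕ)
    (h : ∀ e ∈ S, (S.filter (fun e' => edgeLT wt e e')).card < m) : S.card ≤ m := by
  rcases S.eq_empty_or_nonempty with rfl | hS
  · simp
  obtain ⟨e, he, hmin⟩ := S.exists_min_image (rk wt S) hS
  have h1 : S.erase e ⊆ S.filter (fun e' => edgeLT wt e e') := by
    intro x hx
    rw [Finset.mem_erase] at hx
    rw [Finset.mem_filter]
    refine ⟨hx.2, ?_⟩
    rcases elt_total wt hx.1 with h2 | h2
    · have := rk_lt wt S hx.2 h2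
      have := hmin x hx.2
      omega
    · exact h2
  have h2 := Finset.card_le_card h1
  rw [Finset.card_erase_of_mem he] at h2
  have := h e he
  omega

/-- pairwise disjoint parts -/
def GoodE (f : ℕ → ℕ) (M : Finset (ℕ × ℕ)) : Prop :=
  ∀ e ∈ M, ∀ e' ∈ M, e ≠ e' →
    f e.1 ≠ f e'.1 ∧ f e.1 ≠ f e'.2 ∧ f e.2 ≠ f e'.1 ∧ f e.2 ≠ f e'.2

lemma good_of_nice (f : ℕ → ℕ) (M : Finset (ℕ × ℕ)) (h1 : IsMatchingE M) (h2 : NiceE f M) :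
    GoodE f M := by
  intro e he e' he' hne
  obtain ⟨a, b, c, d⟩ := h1 e he e' he' hne
  have c1 : e.1 ∈ coveredE M := ⟨e, he, Or.inl rfl⟩
  have c2 : e.2 ∈ coveredE M := ⟨e, he, Or.inr rfl⟩
  have c3 : e'.1 ∈ coveredE M := ⟨e', he', Or.inl rfl⟩
  have c4 : e'.2 ∈ coveredE M := ⟨e', he', Or.inr rfl⟩
  exact ⟨fun h => a (h2 c1 c3 h), fun h => b (h2 c1 c4 h), fun h => c (h2 c2 c3 h),
    fun h => d (h2 c2 c4 h)⟩

lemma matching_of_good (f : ℕ → ℕ) (M : Finset (ℕ × ℕ)) (h : GoodE f M) : IsMatchingE M := by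
  intro e he e' he' hne
  obtain ⟨a, b, c, d⟩ := h e he e' he' hne
  exact ⟨fun h => a (by rw [h]), fun h => b (by rw [h]), fun h => c (by rw [h]),
    fun h => d (by rw [h])⟩

lemma nice_of_good (f : ℕ → ℕ) (M : Finset (ℕ × ℕ)) (h : GoodE f M)
    (hd : ∀ e ∈ M, f e.1 ≠ f e.2) : NiceE f M := by
  rintro x ⟨e, he, hx⟩ y ⟨e', he', hy⟩ hxy
  by_cases hee : e = e'
  · subst hee
    have := hd e he
    rcases hx with rfl | rfl <;> rcases hy with rfl | rfl
    · rfl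
    · exact absurd hxy this
    · exact absurd hxy.symm this
    · rfl
  · obtain ⟨a, b, c, d⟩ := h e he e' he' hee
    rcases hx with rfl | rfl <;> rcases hy with rfl | rfl <;> contradiction

/-- the parts touched by a set of edges -/
def partsE (f : ℕ → ℕ) (M : Finset (ℕ × ℕ)) : Finset ℕ :=
  M.image (fun e => f e.1) ∪ M.image (fun e => f e.2)

lemma partsE_card (f : ℕ → ℕ) (M : Finset (ℕ × ℕ)) : (partsE f M).card ≤ 2 * M.card := by
  have h := Finset.card_union_le (M.image (fun e => f e.1)) (M.image (fun e => f e.2))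
  have h1 : (M.image (fun e => f e.1)).card ≤ M.card := Finset.card_image_le
  have h2 : (M.image (fun e => f e.2)).card ≤ M.card := Finset.card_image_le
  unfold partsE
  omega

lemma compact_unique (wt : ℕ × ℕ → ℝ) (f : ℕ → ℕ) (H : Finset (ℕ × ℕ)) {a b : ℕ × ℕ}
    (ha : a ∈ CompactG wt f H) (hb : b ∈ CompactG wt f H)
    (h : ({f a.1, f a.2} : Finset ℕ) = {f b.1, f b.2}) : a = b := by
  unfold CompactG at ha hb
  rw [Finset.mem_filter] at ha hb
  by_contra hne
  rcases elt_total wt hne with h1 | h1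
  · exact ha.2.2 b hb.1 h.symm h1
  · exact hb.2.2 a ha.1 h h1

/-- An edge incident to part `p`, avoiding the forbidden parts. -/
lemma exists_avoid1 (wt : ℕ × ℕ → ℝ) (f : ℕ → ℕ) (H : Finset (ℕ × ℕ)) (p : ℕ) (B : Finset ℕ)
    (hp : p ∉ B) (S : Finset (ℕ × ℕ)) (hS : S ⊆ CompactG wt f H)
    (hSp : ∀ e ∈ S, f e.1 = p ∨ f e.2 = p) (hc : B.card < S.card) :
    ∃ e ∈ S, f e.1 ∉ B ∧ f e.2 ∉ B := by
  by_contra hcon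
  push Not at hcon
  have hsub : S ⊆ B.biUnion (fun b => S.filter (fun e => f e.1 = b ∨ f e.2 = b)) := by
    intro e he
    simp only [Finset.mem_biUnion, Finset.mem_filter]
    by_cases h1 : f e.1 ∈ B
    · exact ⟨_, h1, he, Or.inl rfl⟩
    · exact ⟨_, hcon e he h1, he, Or.inr rfl⟩
  have h1 := Finset.card_le_card hsub
  have h2 := Finset.card_biUnion_le_card_mul B
    (fun b => S.filter (fun e => f e.1 = b ∨ f e.2 = b)) 1 (by
      intro b hb
      rw [Finset.card_le_one]
      intro x hx y hy
      rw [Finset.mem_filter] at hx hy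
      have hpb : p ≠ b := fun h => hp (h ▸ hb)
      have key : ∀ z : ℕ × ℕ, z ∈ S → (f z.1 = b ∨ f z.2 = b) →
          ({f z.1, f z.2} : Finset ℕ) = {p, b} := by
        intro z hz hzb
        rcases hSp z hz with h | h <;> rcases hzb with h' | h'
        · exact absurd (h.symm.trans h') hpb
        · rw [h, h']
        · rw [h, h', Finset.pair_comm]
        · exact absurd (h.symm.trans h') hpb
      exact compact_unique wt f H (hS hx.1) (hS hy.1)
        ((key x hx.1 hx.2).trans (key y hy.1 hy.2).symm))
  omega

lemma exists_avoid2 (f : ℕ → ℕ) (B : Finset ℕ) (S : Finset (ℕ × ℕ)) (m : ℕ)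
    (hdeg : ∀ b ∈ B, (S.filter (fun e => f e.1 = b ∨ f e.2 = b)).card ≤ m)
    (hc : B.card * m < S.card) :
    ∃ e ∈ S, f e.1 ∉ B ∧ f e.2 ∉ B := by
  by_contra hcon
  push Not at hcon
  have hsub : S ⊆ B.biUnion (fun b => S.filter (fun e => f e.1 = b ∨ f e.2 = b)) := by
    intro e he
    simp only [Finset.mem_biUnion, Finset.mem_filter]
    by_cases h1 : f e.1 ∈ B
    · exact ⟨_, h1, he, Or.inl rfl⟩
    · exact ⟨_, hcon e he h1, he, Or.inr rfl⟩
  have h1 := Finset.card_le_card hsub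
  have h2 := Finset.card_biUnion_le_card_mul B _ m hdeg
  omega

/-- the first selection step -/
noncomputable def R1G (wt : ℕ × ℕ → ℝ) (f : ℕ → ℕ) (k : ℕ)
    (C : Finset (ℕ × ℕ)) : Finset (ℕ × ℕ) :=
  C.filter (fun e =>
    (C.filter (fun e' => (f e'.1 = f e.1 ∨ f e'.2 = f e.1) ∧
      edgeLT wt e e')).card < 8 * k ∧
    (C.filter (fun e' => (f e'.1 = f e.2 ∨ f e'.2 = f e.2) ∧
      edgeLT wt e e')).card < 8 * k)

lemma mem_RedCom (wt : ℕ × ℕ → ℝ) (f : ℕ → ℕ) (k : ℕ) (H : Finset (ℕ × ℕ)) (e : ℕ × ℕ) :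
    e ∈ RedComG wt f k H ↔ e ∈ R1G wt f k (CompactG wt f H) ∧
      ((R1G wt f k (CompactG wt f H)).filter (fun e' => edgeLT wt e e')).card
        < k * (16 * k - 1) := by
  unfold RedComG R1G
  exact Finset.mem_filter

lemma R1_deg (wt : ℕ × ℕ → ℝ) (f : ℕ → ℕ) (k : ℕ) (C : Finset (ℕ × ℕ)) (p : ℕ) :
    ((R1G wt f k C).filter (fun e => f e.1 = p ∨ f e.2 = p)).card ≤ 8 * k := by
  apply card_le_of_top wt
  intro e he
  rw [Finset.mem_filter] at he
  obtain ⟨he, hp⟩ := he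
  unfold R1G at he
  rw [Finset.mem_filter] at he
  have hsub : ((R1G wt f k C).filter (fun e => f e.1 = p ∨ f e.2 = p)).filter
      (fun e' => edgeLT wt e e') ⊆
      C.filter (fun e' => (f e'.1 = p ∨ f e'.2 = p) ∧ edgeLT wt e e') := by
    intro x hx
    simp only [R1G, Finset.mem_filter] at hx ⊢
    exact ⟨hx.1.1.1, hx.1.2, hx.2⟩
  have h1 := Finset.card_le_card hsub
  rcases hp with rfl | rfl
  · exact h1.trans_lt he.2.1
  · exact h1.trans_lt he.2.2

/-- an edge of the matching outside the reduced graph can be exchanged -/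
lemma exists_edge_swap (wt : ℕ × ℕ → ℝ) (f : ℕ → ℕ) (k : ℕ) (hk : 1 ≤ k) (H : Finset (ℕ × ℕ))
    (B : Finset ℕ) (hB : B.card ≤ 2 * (k - 1)) (e : ℕ × ℕ) (he : e ∈ CompactG wt f H)
    (h1 : f e.1 ∉ B) (h2 : f e.2 ∉ B) (hR : e ∉ RedComG wt f k H) :
    ∃ e' ∈ CompactG wt f H, edgeLT wt e e' ∧ f e'.1 ∉ B ∧ f e'.2 ∉ B := by
  have aux : ∀ p, p ∉ B → 8 * k ≤ ((CompactG wt f H).filter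
      (fun e' => (f e'.1 = p ∨ f e'.2 = p) ∧ edgeLT wt e e')).card →
      ∃ e' ∈ CompactG wt f H, edgeLT wt e e' ∧ f e'.1 ∉ B ∧ f e'.2 ∉ B := by
    intro p hp hc
    obtain ⟨e', he', h⟩ := exists_avoid1 wt f H p B hp _ (Finset.filter_subset _ _)
      (fun x hx => (Finset.mem_filter.1 hx).2.1)
      (lt_of_lt_of_le (by omega : B.card < 8 * k) hc)
    rw [Finset.mem_filter] at he'
    exact ⟨e', he'.1, he'.2.2, h⟩
  by_cases hR1 : e ∈ R1G wt f k (CompactG wt f H)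
  · have hq : k * (16 * k - 1) ≤
        ((R1G wt f k (CompactG wt f H)).filter (fun e' => edgeLT wt e e')).card := by
      by_contra hc
      push Not at hc
      exact hR ((mem_RedCom wt f k H e).2 ⟨hR1, hc⟩)
    obtain ⟨e', he', h⟩ := exists_avoid2 f B
      ((R1G wt f k (CompactG wt f H)).filter (fun e' => edgeLT wt e e')) (8 * k) (by
        intro b _
        refine (Finset.card_le_card ?_).trans (R1_deg wt f k (CompactG wt f H) b)
        exact Finset.filter_subset_filter _ (Finset.filter_subset _ _)) (by
        refine lt_of_lt_of_le ?_ hq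
        refine (Nat.mul_le_mul_right _ hB).trans_lt ?_
        obtain ⟨j, rfl⟩ : ∃ j, k = j + 1 := ⟨k - 1, by omega⟩
        have e1 : j + 1 - 1 = j := by omega
        have e2 : 16 * (j + 1) - 1 = 16 * j + 15 := by omega
        rw [e1, e2]
        nlinarith)
    rw [Finset.mem_filter] at he'
    exact ⟨e', (Finset.mem_filter.1 he'.1).1, he'.2, h⟩
  · unfold R1G at hR1
    rw [Finset.mem_filter] at hR1
    by_cases hc : ((CompactG wt f H).filter (fun e' => (f e'.1 = f e.1 ∨ f e'.2 = f e.1) ∧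
      edgeLT wt e e')).card < 8 * k
    · exact aux _ h2 (by
        by_contra hc'
        push Not at hc'
        exact hR1 ⟨he, hc, hc'⟩)
    · exact aux _ h1 (by omega)

lemma mem_partsE_left (f : ℕ → ℕ) {M : Finset (ℕ × ℕ)} {e : ℕ × ℕ} (h : e ∈ M) :
    f e.1 ∈ partsE f M :=
  Finset.mem_union_left _ (Finset.mem_image_of_mem (fun e => f e.1) h)

lemma mem_partsE_right (f : ℕ → ℕ) {M : Finset (ℕ × ℕ)} {e : ℕ × ℕ} (h : e ∈ M) :
    f e.2 ∈ partsE f M :=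
  Finset.mem_union_right _ (Finset.mem_image_of_mem (fun e => f e.2) h)

lemma improve (wt : ℕ × ℕ → ℝ) (f : ℕ → ℕ) (k : ℕ) (hk : 1 ≤ k) (H : Finset (ℕ × ℕ))
    (M : Finset (ℕ × ℕ)) (hM : M ⊆ CompactG wt f H) (hc : M.card = k) (hg : GoodE f M)
    (hR : ¬ M ⊆ RedComG wt f k H) :
    ∃ M', M' ⊆ CompactG wt f H ∧ M'.card = k ∧ GoodE f M' ∧ mweight wt M ≤ mweight wt M' ∧
      ∑ e ∈ M, rk wt (CompactG wt f H) e < ∑ e ∈ M', rk wt (CompactG wt f H) e := by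
  obtain ⟨e, he, heR⟩ := Finset.not_subset.1 hR
  have hce : (M.erase e).card = k - 1 := by rw [Finset.card_erase_of_mem he, hc]
  have hB : (partsE f (M.erase e)).card ≤ 2 * (k - 1) := by
    rw [← hce]; exact partsE_card f _
  have hav : f e.1 ∉ partsE f (M.erase e) ∧ f e.2 ∉ partsE f (M.erase e) := by
    constructor <;>
    · intro h
      unfold partsE at h
      simp only [Finset.mem_union, Finset.mem_image, Finset.mem_erase] at h
      rcases h with ⟨x, hx, h⟩ | ⟨x, hx, h⟩ <;>
      · have := hg x hx.2 e he hx.1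
        tauto
  obtain ⟨e', he', hlt, h1, h2⟩ := exists_edge_swap wt f k hk H _ hB e (hM he) hav.1 hav.2 heR
  have hnot : e' ∉ M.erase e := fun h => h1 (mem_partsE_left f h)
  refine ⟨insert e' (M.erase e), ?_, ?_, ?_, ?_, ?_⟩
  · intro x hx
    rcases Finset.mem_insert.1 hx with rfl | hx
    · exact he'
    · exact hM (Finset.mem_of_mem_erase hx)
  · rw [Finset.card_insert_of_notMem hnot, hce]; omega
  · intro x hx y hy hne
    rcases Finset.mem_insert.1 hx with rfl | hx2 <;> rcases Finset.mem_insert.1 hy with rfl | hy2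
    · exact absurd rfl hne
    · have a := mem_partsE_left f hy2
      have b := mem_partsE_right f hy2
      exact ⟨fun h => h1 (h ▸ a), fun h => h1 (h ▸ b), fun h => h2 (h ▸ a), fun h => h2 (h ▸ b)⟩
    · have a := mem_partsE_left f hx2
      have b := mem_partsE_right f hx2
      exact ⟨fun h => h1 (h ▸ a), fun h => h2 (h ▸ a), fun h => h1 (h ▸ b), fun h => h2 (h ▸ b)⟩
    · exact hg x (Finset.mem_of_mem_erase hx2) y (Finset.mem_of_mem_erase hy2) hne
  · unfold mweight
    rw [Finset.sum_insert hnot, ← Finset.add_sum_erase M wt he]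
    have := elt_le wt hlt
    linarith
  · rw [Finset.sum_insert hnot, ← Finset.add_sum_erase M _ he]
    have := rk_lt wt (CompactG wt f H) (hM he) hlt
    omega

lemma toRed (wt : ℕ × ℕ → ℝ) (f : ℕ → ℕ) (k : ℕ) (hk : 1 ≤ k) (H : Finset (ℕ × ℕ))
    (M : Finset (ℕ × ℕ)) (hM : IsKMatchingE (CompactG wt f H) M k) (hn : NiceE f M) :
    ∃ M', IsKMatchingE (RedComG wt f k H) M' k ∧ NiceE f M' ∧ mweight wt M ≤ mweight wt M' := by
  set C := CompactG wt f H with hC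
  let F := C.powerset.filter (fun M' => M'.card = k ∧ GoodE f M' ∧ mweight wt M ≤ mweight wt M')
  have hF : M ∈ F := by
    simp only [F, Finset.mem_filter, Finset.mem_powerset]
    exact ⟨hM.1, hM.2.1, good_of_nice f M hM.2.2 hn, le_rfl⟩
  obtain ⟨M', hM', hmax⟩ := F.exists_max_image (fun M' => ∑ e ∈ M', rk wt C e) ⟨M, hF⟩
  simp only [F, Finset.mem_filter, Finset.mem_powerset] at hM' hmax
  obtain ⟨a, b, c, d⟩ := hM'
  have hsub : M' ⊆ RedComG wt f k H := by
    by_contra hR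
    obtain ⟨M2, a2, b2, c2, d2, e2⟩ := improve wt f k hk H M' a b c hR
    have := hmax M2 ⟨a2, b2, c2, d.trans d2⟩
    rw [← hC] at e2
    omega
  exact ⟨M', ⟨hsub, b, matching_of_good f M' c⟩,
    nice_of_good f M' c (fun e he => (Finset.mem_filter.1 (a he)).2.1), d⟩

lemma red_subset (wt : ℕ × ℕ → ℝ) (f : ℕ → ℕ) (k : ℕ) (H : Finset (ℕ × ℕ)) :
    RedComG wt f k H ⊆ CompactG wt f H := by
  intro e he
  exact (Finset.mem_filter.1 ((mem_RedCom wt f k H e).1 he).1).1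

/- **Statement 7.** Let `G` be a simple graph on `{0,…,n-1}` with nonnegative
edge weights, `k ≥ 1`, `f : V → {0,…,4k²-1}`, and `H` a subgraph of `G`.
Then `CompactG wt f H` has a nice `k`-matching iff `RedComG wt f k H` does;
moreover, if so, the maximum weight of a nice `k`-matching in `CompactG`
equals the maximum weight of a nice `k`-matching in `RedComG`. -/
theorem stmt7 (n k : ℕ) (hk : 1 ≤ k)
    (wt : ℕ × ℕ → ℝ) (hwt : ∀ e, 0 ≤ wt e)
    (E : Finset (ℕ × ℕ)) (hE : ∀ e ∈ E, e.1 < e.2 ∧ e.2 < n)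
    (f : ℕ → ℕ) (hf : ∀ v, v < n → f v < 4 * k ^ 2)
    (H : Finset (ℕ × ℕ)) (hH : H ⊆ E) :
    ((∃ M, IsKMatchingE (CompactG wt f H) M k ∧ NiceE f M) ↔
      (∃ M, IsKMatchingE (RedComG wt f k H) M k ∧ NiceE f M)) ∧
    ((∃ M, IsKMatchingE (CompactG wt f H) M k ∧ NiceE f M) →
      ∃ M₁ M₂ : Finset (ℕ × ℕ),
        IsKMatchingE (CompactG wt f H) M₁ k ∧ NiceE f M₁ ∧
        (∀ M, IsKMatchingE (CompactG wt f H) M k → NiceE f M →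
          mweight wt M ≤ mweight wt M₁) ∧
        IsKMatchingE (RedComG wt f k H) M₂ k ∧ NiceE f M₂ ∧
        (∀ M, IsKMatchingE (RedComG wt f k H) M k → NiceE f M →
          mweight wt M ≤ mweight wt M₂) ∧
        mweight wt M₁ = mweight wt M₂) := by
  have back : ∀ M, IsKMatchingE (RedComG wt f k H) M k → IsKMatchingE (CompactG wt f H) M k :=
    fun M h => ⟨h.1.trans (red_subset wt f k H), h.2⟩
  refine ⟨⟨?_, ?_⟩, ?_⟩
  · rintro ⟨M, h, h'⟩
    obtain ⟨M', a, b, _⟩ := toRed wt f k hk H M h h'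
    exact ⟨M', a, b⟩
  · rintro ⟨M, h, h'⟩
    exact ⟨M, back M h, h'⟩
  · rintro ⟨M, h, h'⟩
    let F := (CompactG wt f H).powerset.filter
      (fun M => IsKMatchingE (CompactG wt f H) M k ∧ NiceE f M)
    have hF : ∀ M, M ∈ F ↔ IsKMatchingE (CompactG wt f H) M k ∧ NiceE f M := by
      intro M
      simp only [F, Finset.mem_filter, Finset.mem_powerset]
      exact ⟨fun h => h.2, fun h => ⟨h.1.1, h⟩⟩
    obtain ⟨M₁, h1, hmax⟩ := F.exists_max_image (mweight wt) ⟨M, (hF M).2 ⟨h, h'⟩⟩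
    rw [hF] at h1
    obtain ⟨M₂, a, b, c⟩ := toRed wt f k hk H M₁ h1.1 h1.2
    refine ⟨M₁, M₂, h1.1, h1.2, fun M x y => hmax M ((hF M).2 ⟨x, y⟩), a, b,
      fun M x y => (hmax M ((hF M).2 ⟨back M x, y⟩)).trans c, ?_⟩
    exact le_antisymm c (hmax M₂ ((hF M₂).2 ⟨back M₂ a, b⟩))
end

section
/- Let Φ be a finite simple graph with edge weights wt : E(Φ) → ℝ≥0, let ≺ be a strict linear order on E(Φ) such that e ≺ e' implies wt(e) ≤ wt(e'), and let k ≥ 1. Let H be the subgraph of Φ consisting of every edge e = uv such that e is among the 8k largest (with respect to ≺) edges incident to u and among the 8k largest edges incident to v (all such edges if a vertex has fewer than 8k incident edges). If Φ contains a k-matching, then H contains a k-matching whose weight equals the maximum weight of a k-matching of Φ; in particular, some maximum-weight k-matching of Φ is entirely contained in H. -/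
open Finset
open Classical

/-- If `e ∈ M` is not among the `8k` largest edges at its endpoint `v`, it can be exchanged. -/
lemma exists_exchange (k : ℕ) (hk : 1 ≤ k) (Φ M : Finset (ℕ × ℕ)) (hΦ : ∀ e ∈ Φ, e.1 < e.2)
    (lt : ℕ × ℕ → ℕ × ℕ → Prop) (hirr : ∀ e ∈ Φ, ¬ lt e e)
    (hM : IsKMatchingE Φ M k) (e : ℕ × ℕ) (he : e ∈ M) (v : ℕ) (hv : v = e.1 ∨ v = e.2)
    (hc : 8 * k ≤ (Φ.filter (fun e' => (e'.1 = v ∨ e'.2 = v) ∧ lt e e')).card) :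
    ∃ e' ∈ Φ, lt e e' ∧ e' ∉ M.erase e ∧ IsKMatchingE Φ (insert e' (M.erase e)) k := by
  obtain ⟨hsub, hcard, hmat⟩ := hM
  set S := Φ.filter (fun e' => (e'.1 = v ∨ e'.2 = v) ∧ lt e e') with hS
  set B := (M.erase e).image Prod.fst ∪ (M.erase e).image Prod.snd with hB
  have hMe : (M.erase e).card = k - 1 := by rw [card_erase_of_mem he, hcard]
  have hBc : B.card ≤ (k - 1) + (k - 1) := by
    refine (card_union_le _ _).trans ?_
    have h1 := card_image_le (s := M.erase e) (f := Prod.fst)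
    have h2 := card_image_le (s := M.erase e) (f := Prod.snd)
    omega
  let f : ℕ × ℕ → ℕ := fun p => if p.1 = v then p.2 else p.1
  have hex : ∃ p ∈ S, f p ∉ B := by
    by_contra! hcon
    have hle : S.card ≤ B.card := by
      refine card_le_card_of_injOn f (fun p hp => hcon p hp) ?_
      rintro ⟨a, b⟩ hp ⟨c, d⟩ hq hpq
      have hp' := mem_filter.1 (mem_coe.1 hp)
      have hq' := mem_filter.1 (mem_coe.1 hq)
      have h1 := hΦ _ hp'.1
      have h2 := hΦ _ hq'.1
      have h3 := hp'.2.1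
      have h4 := hq'.2.1
      simp only [f] at hpq
      simp only at h1 h2 h3 h4
      rw [Prod.mk.injEq]
      split_ifs at hpq <;> omega
    omega
  obtain ⟨p, hp, hpB⟩ := hex
  have hp' := mem_filter.1 hp
  obtain ⟨hpΦ, hpv, hlt⟩ := hp'
  have hfree : ∀ q ∈ M.erase e, p.1 ≠ q.1 ∧ p.1 ≠ q.2 ∧ p.2 ≠ q.1 ∧ p.2 ≠ q.2 := by
    intro q hq
    have hqe := mem_erase.1 hq
    have h1 := hmat e he q hqe.2 (Ne.symm hqe.1)
    have h2 : f p ≠ q.1 := fun h => hpB (h ▸ mem_union_left _ (mem_image_of_mem _ hq))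
    have h3 : f p ≠ q.2 := fun h => hpB (h ▸ mem_union_right _ (mem_image_of_mem _ hq))
    simp only [f] at h2 h3
    split_ifs at h2 h3 <;> omega
  have hpM : p ∉ M.erase e := fun h => (hfree p h).1 rfl
  refine ⟨p, hpΦ, hlt, hpM, ?_, ?_, ?_⟩
  · intro q hq
    rcases mem_insert.1 hq with rfl | hq
    · exact hpΦ
    · exact hsub (mem_of_mem_erase hq)
  · rw [card_insert_of_notMem hpM, hMe]; omega
  · intro a ha b hb hab
    rcases mem_insert.1 ha with rfl | ha2 <;> rcases mem_insert.1 hb with rfl | hb2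
    · exact absurd rfl hab
    · exact hfree b hb2
    · obtain ⟨h1, h2, h3, h4⟩ := hfree a ha2
      exact ⟨h1.symm, h3.symm, h2.symm, h4.symm⟩
    · exact hmat a (mem_of_mem_erase ha2) b (mem_of_mem_erase hb2) hab

/- **Statement 8.** Let `Φ` be a finite simple graph with nonnegative edge
weights, `lt` a strict linear order on `E(Φ)` with `lt e e' → wt e ≤ wt e'`,
and `k ≥ 1`.  Let `H` consist of every edge of `Φ` that is among the `8k`
`lt`-largest edges incident to each of its two endpoints (an edge `e` is
among the `m` largest edges incident to `v` iff at most `m-1` incident edges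
are `lt`-larger than `e`).  If `Φ` contains a `k`-matching, then `H` contains
a `k`-matching whose weight equals the maximum weight of a `k`-matching
of `Φ`. -/
theorem stmt8 (k : ℕ) (hk : 1 ≤ k)
    (wt : ℕ × ℕ → ℝ) (hwt : ∀ e, 0 ≤ wt e)
    (Φ : Finset (ℕ × ℕ)) (hΦ : ∀ e ∈ Φ, e.1 < e.2)
    (lt : ℕ × ℕ → ℕ × ℕ → Prop)
    (hirr : ∀ e ∈ Φ, ¬ lt e e)
    (htrans : ∀ e ∈ Φ, ∀ e' ∈ Φ, ∀ e'' ∈ Φ, lt e e' → lt e' e'' → lt e e'')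
    (htotal : ∀ e ∈ Φ, ∀ e' ∈ Φ, e ≠ e' → lt e e' ∨ lt e' e)
    (hmono : ∀ e ∈ Φ, ∀ e' ∈ Φ, lt e e' → wt e ≤ wt e')
    (H : Finset (ℕ × ℕ))
    (hH : ∀ e : ℕ × ℕ, e ∈ H ↔ e ∈ Φ ∧
      (Φ.filter (fun e' => (e'.1 = e.1 ∨ e'.2 = e.1) ∧ lt e e')).card < 8 * k ∧
      (Φ.filter (fun e' => (e'.1 = e.2 ∨ e'.2 = e.2) ∧ lt e e')).card < 8 * k)
    (hex : ∃ M, IsKMatchingE Φ M k) :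
    ∃ M, IsKMatchingE H M k ∧
      ∀ M', IsKMatchingE Φ M' k → mweight wt M' ≤ mweight wt M := by
  let r : ℕ × ℕ → ℕ := fun e => (Φ.filter (fun e' => lt e' e)).card
  have hr : ∀ e ∈ Φ, ∀ e' ∈ Φ, lt e e' → r e < r e' := by
    intro e he e' he' h
    refine card_lt_card ((ssubset_iff_of_subset ?_).2 ⟨e, ?_, ?_⟩)
    · intro x hx
      have hx := mem_filter.1 hx
      exact mem_filter.2 ⟨hx.1, htrans x hx.1 e he e' he' hx.2 h⟩
    · exact mem_filter.2 ⟨he, h⟩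
    · exact fun hx => hirr e he (mem_filter.1 hx).2
  let K := Φ.powerset.filter (fun M => IsKMatchingE Φ M k)
  have hK : ∀ M, M ∈ K ↔ IsKMatchingE Φ M k := fun M => by
    simp only [K, mem_filter, mem_powerset]
    exact ⟨fun h => h.2, fun h => ⟨h.1, h⟩⟩
  obtain ⟨M₀, hM₀⟩ := hex
  obtain ⟨M₁, hM₁, hmax₁⟩ := exists_max_image K (mweight wt) ⟨M₀, (hK _).2 hM₀⟩
  obtain ⟨M, hM, hmax⟩ := exists_max_image (K.filter (fun M => mweight wt M₁ ≤ mweight wt M))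
    (fun M => ∑ e ∈ M, r e) ⟨M₁, mem_filter.2 ⟨hM₁, le_rfl⟩⟩
  obtain ⟨hMK, hMw⟩ := mem_filter.1 hM
  have hMk := (hK M).1 hMK
  refine ⟨M, ⟨?_, hMk.2⟩, fun M' hM' => (hmax₁ M' ((hK _).2 hM')).trans hMw⟩
  have key : ∀ e ∈ M, ∀ v, (v = e.1 ∨ v = e.2) →
      (Φ.filter (fun e' => (e'.1 = v ∨ e'.2 = v) ∧ lt e e')).card < 8 * k := by
    intro e he v hv
    by_contra! hc
    obtain ⟨p, hpΦ, hlt, hpM, hk'⟩ := exists_exchange k hk Φ M hΦ lt hirr hMk e he v hv hc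
    have heΦ := hMk.1 he
    have hw : mweight wt M ≤ mweight wt (insert p (M.erase e)) := by
      unfold mweight
      rw [sum_insert hpM, ← add_sum_erase M wt he]
      have := hmono e heΦ p hpΦ hlt
      linarith
    have h1 := hmax _ (mem_filter.2 ⟨(hK _).2 hk', hMw.trans hw⟩)
    rw [sum_insert hpM, ← add_sum_erase M r he] at h1
    have := hr e heΦ p hpΦ hlt
    omega
  intro e he
  exact (hH e).2 ⟨hMk.1 he, key e he _ (Or.inl rfl), key e he _ (Or.inr rfl)⟩
end

section
/- Let H be a finite simple graph with edge weights wt : E(H) → ℝ≥0, let ≺ be a strict linear order on E(H) such that e ≺ e' implies wt(e) ≤ wt(e'), and let k ≥ 1. Suppose every vertex of H is incident to at most 8k edges, and that H contains a k-matching. Let q = k(16k-1) and let E' be the set consisting of the q largest edges of H with respect to ≺ (all edges of H if |E(H)| ≤ q). Then E' contains a k-matching whose weight equals the maximum weight of a k-matching of H. -/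
open Finset
open Classical

/- **Statement 9.** Let `H` be a finite simple graph with nonnegative edge
weights, `lt` a strict linear order on `E(H)` with `lt e e' → wt e ≤ wt e'`,
and `k ≥ 1`.  Suppose every vertex is incident to at most `8k` edges and `H`
has a `k`-matching.  Let `q = k(16k-1)` and let `E'` consist of the `q`
`lt`-largest edges of `H` (an edge belongs to `E'` iff fewer than `q` edges
of `H` are `lt`-larger than it).  Then `E'` contains a `k`-matching whose
weight equals the maximum weight of a `k`-matching of `H`. -/
theorem stmt9 (k : ℕ) (hk : 1 ≤ k)
    (wt : ℕ × ℕ → ℝ) (hwt : ∀ e, 0 ≤ wt e)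
    (H : Finset (ℕ × ℕ)) (hHs : ∀ e ∈ H, e.1 < e.2)
    (lt : ℕ × ℕ → ℕ × ℕ → Prop)
    (hirr : ∀ e ∈ H, ¬ lt e e)
    (htrans : ∀ e ∈ H, ∀ e' ∈ H, ∀ e'' ∈ H, lt e e' → lt e' e'' → lt e e'')
    (htotal : ∀ e ∈ H, ∀ e' ∈ H, e ≠ e' → lt e e' ∨ lt e' e)
    (hmono : ∀ e ∈ H, ∀ e' ∈ H, lt e e' → wt e ≤ wt e')
    (hdeg : ∀ v : ℕ, (H.filter (fun e => e.1 = v ∨ e.2 = v)).card ≤ 8 * k)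
    (hex : ∃ M, IsKMatchingE H M k)
    (E' : Finset (ℕ × ℕ))
    (hE' : ∀ e : ℕ × ℕ, e ∈ E' ↔ e ∈ H ∧
      (H.filter (fun e' => lt e e')).card < k * (16 * k - 1)) :
    ∃ M, IsKMatchingE E' M k ∧
      ∀ M', IsKMatchingE H M' k → mweight wt M' ≤ mweight wt M := by
  obtain ⟨M1, hM1⟩ := hex
  obtain ⟨M2, hM2, hmax⟩ := Finset.exists_max_image
    (H.powerset.filter (fun M => IsKMatchingE H M k)) (mweight wt)
    ⟨M1, by simp [hM1, hM1.1]⟩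
  have hM2' : IsKMatchingE H M2 k := (Finset.mem_filter.1 hM2).2
  have hmax' : ∀ M', IsKMatchingE H M' k → mweight wt M' ≤ mweight wt M2 :=
    fun M' h => hmax M' (by simp [h, h.1])
  let r : ℕ × ℕ → ℕ := fun e => (H.filter (fun e' => lt e e')).card
  obtain ⟨M, hMm, hmin⟩ := Finset.exists_min_image
    (H.powerset.filter (fun M => IsKMatchingE H M k ∧ mweight wt M2 ≤ mweight wt M))
    (fun M => ∑ e ∈ M, r e) ⟨M2, by simp [hM2', hM2'.1]⟩
  obtain ⟨-, hM, hMw⟩ := Finset.mem_filter.1 hMm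
  refine ⟨M, ⟨?_, hM.2⟩, fun M' h => (hmax' M' h).trans hMw⟩
  intro e he
  by_contra hne
  have heH : e ∈ H := hM.1 he
  have hL : k * (16 * k - 1) ≤ (H.filter (fun e' => lt e e')).card := by
    by_contra hc
    exact hne ((hE' e).2 ⟨heH, by omega⟩)
  let A : ℕ → Finset (ℕ × ℕ) := fun v => H.filter (fun e => e.1 = v ∨ e.2 = v)
  have hT : ∀ g ∈ M.erase e, (A g.1 ∪ A g.2).card ≤ 16 * k - 1 := by
    intro g hg
    have hgH : g ∈ H := hM.1 (Finset.mem_of_mem_erase hg)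
    have h1 := Finset.card_union_add_card_inter (A g.1) (A g.2)
    have h2 : 0 < (A g.1 ∩ A g.2).card :=
      Finset.card_pos.2 ⟨g, by simp [A, hgH]⟩
    have h3 : (A g.1).card ≤ 8 * k := hdeg g.1
    have h4 : (A g.2).card ≤ 8 * k := hdeg g.2
    omega
  have hB := Finset.card_biUnion_le_card_mul (M.erase e) (fun g => A g.1 ∪ A g.2) _ hT
  rw [Finset.card_erase_of_mem he, hM.2.1] at hB
  have hlt : (k - 1) * (16 * k - 1) < k * (16 * k - 1) :=
    Nat.mul_lt_mul_of_pos_right (by omega) (by omega)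
  obtain ⟨f, hfL, hfB⟩ := Finset.exists_mem_notMem_of_card_lt_card
    (lt_of_le_of_lt hB (lt_of_lt_of_le hlt hL))
  obtain ⟨hfH, hef⟩ := Finset.mem_filter.1 hfL
  have hdis : ∀ g ∈ M.erase e, f.1 ≠ g.1 ∧ f.2 ≠ g.1 ∧ f.1 ≠ g.2 ∧ f.2 ≠ g.2 := by
    intro g hg
    have h : f ∉ A g.1 ∪ A g.2 := fun h => hfB (Finset.mem_biUnion.2 ⟨g, hg, h⟩)
    simp only [A, Finset.mem_union, Finset.mem_filter] at h
    tauto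
  have hfM : f ∉ M.erase e := fun h => (hdis f h).1 rfl
  have hN : IsKMatchingE H (insert f (M.erase e)) k := by
    refine ⟨?_, ?_, ?_⟩
    · intro x hx
      rcases Finset.mem_insert.1 hx with rfl | hx
      · exact hfH
      · exact hM.1 (Finset.mem_of_mem_erase hx)
    · rw [Finset.card_insert_of_notMem hfM, Finset.card_erase_of_mem he, hM.2.1]
      omega
    · intro x hx y hy hxy
      rcases Finset.mem_insert.1 hx with rfl | hx1
      · rcases Finset.mem_insert.1 hy with rfl | hy1
        · exact absurd rfl hxy
        · have := hdis y hy1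
          tauto
      · rcases Finset.mem_insert.1 hy with rfl | hy1
        · obtain ⟨a, b, c, d⟩ := hdis x hx1
          exact ⟨a.symm, b.symm, c.symm, d.symm⟩
        · exact hM.2.2 x (Finset.mem_of_mem_erase hx1) y (Finset.mem_of_mem_erase hy1) hxy
  have hw : mweight wt M ≤ mweight wt (insert f (M.erase e)) := by
    unfold mweight
    rw [Finset.sum_insert hfM, ← Finset.add_sum_erase M wt he]
    linarith [hmono e heH f hfH hef]
  have hr : r f < r e := by
    apply Finset.card_lt_card
    refine ⟨?_, fun h => hirr f hfH (Finset.mem_filter.1 (h hfL)).2⟩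
    intro x hx
    obtain ⟨hxH, hfx⟩ := Finset.mem_filter.1 hx
    exact Finset.mem_filter.2 ⟨hxH, htrans e heH f hfH x hxH hef hfx⟩
  have hfin := hmin (insert f (M.erase e)) (by
    simp only [Finset.mem_filter, Finset.mem_powerset]
    exact ⟨hN.1, hN, hMw.trans hw⟩)
  rw [Finset.sum_insert hfM, ← Finset.add_sum_erase M r he] at hfin
  omega
end

section
/- Let G be a simple graph on vertex set V = {0,...,n-1} with edge weights wt : E(G) → ℝ≥0, let k ≥ 1, and let f : V → {0,...,4k²-1}. Suppose M is a maximum-weight k-matching of G and f is injective on the set V(M) of vertices covered by M. Then Compact(G,f) contains a nice k-matching M' (with respect to f) with wt(M') = wt(M); in particular, Compact(G,f) contains a maximum-weight k-matching of G. -/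
open Finset
open Classical

/- **Statement 10.** Let `G` be a simple graph on `{0,…,n-1}` with nonnegative
edge weights, `k ≥ 1`, `f : V → {0,…,4k²-1}`.  If `M` is a maximum-weight
`k`-matching of `G` and `f` is injective on the vertices covered by `M`, then
`CompactG wt f G` contains a nice `k`-matching `M'` with `wt M' = wt M`; in
particular it contains a maximum-weight `k`-matching of `G`. -/
theorem stmt10 (n k : ℕ) (hk : 1 ≤ k)
    (wt : ℕ × ℕ → ℝ) (hwt : ∀ e, 0 ≤ wt e)
    (E : Finset (ℕ × ℕ)) (hE : ∀ e ∈ E, e.1 < e.2 ∧ e.2 < n)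
    (f : ℕ → ℕ) (hf : ∀ v, v < n → f v < 4 * k ^ 2)
    (M : Finset (ℕ × ℕ)) (hM : IsKMatchingE E M k)
    (hMmax : ∀ M', IsKMatchingE E M' k → mweight wt M' ≤ mweight wt M)
    (hinj : Set.InjOn f (coveredE M)) :
    ∃ M' : Finset (ℕ × ℕ),
      IsKMatchingE (CompactG wt f E) M' k ∧ NiceE f M' ∧
      mweight wt M' = mweight wt M ∧
      ∀ M'', IsKMatchingE E M'' k → mweight wt M'' ≤ mweight wt M' := by
  obtain ⟨hME, hMc, hMm⟩ := hM
  -- every edge of `M` has a heaviest parallel edge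
  have hex : ∀ e : ℕ × ℕ, ∃ g : ℕ × ℕ, e ∈ M → (g ∈ E ∧ wt e ≤ wt g ∧
      ({f g.1, f g.2} : Finset ℕ) = {f e.1, f e.2} ∧
      ∀ e' ∈ E, ({f e'.1, f e'.2} : Finset ℕ) = {f e.1, f e.2} → ¬ edgeLT wt g e') := by
    intro e
    by_cases he : e ∈ M
    · obtain ⟨g, hg, hmax⟩ := Finset.exists_max_image
        (E.filter (fun e' => ({f e'.1, f e'.2} : Finset ℕ) = {f e.1, f e.2}))
        (fun e' => toLex (wt e', toLex e')) ⟨e, by simp [hME he]⟩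
      rw [Finset.mem_filter] at hg
      refine ⟨g, fun _ => ⟨hg.1, ?_, hg.2, ?_⟩⟩
      · have h := hmax e (by simp [hME he])
        rw [Prod.Lex.toLex_le_toLex] at h
        rcases h with h | h
        · exact h.le
        · exact h.1.le
      · intro e' he' hp hlt
        have h := hmax e' (by simp [he', hp])
        refine absurd h (not_le.mpr ?_)
        rw [Prod.Lex.toLex_lt_toLex]
        rcases hlt with hlt | ⟨h1, h2⟩
        · exact Or.inl hlt
        · exact Or.inr ⟨h1, Prod.Lex.toLex_lt_toLex.mpr h2⟩
    · exact ⟨e, fun h => absurd h he⟩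
  choose g hg using hex
  -- distinct edges of `M` touch disjoint parts
  have hpart : ∀ e ∈ M, ∀ e' ∈ M, ∀ a, a ∈ ({f e.1, f e.2} : Finset ℕ) →
      a ∈ ({f e'.1, f e'.2} : Finset ℕ) → e = e' := by
    intro e he e' he' a ha ha'
    by_contra hne
    obtain ⟨h1, h2, h3, h4⟩ := hMm e he e' he' hne
    have c1 : e.1 ∈ coveredE M := ⟨e, he, Or.inl rfl⟩
    have c2 : e.2 ∈ coveredE M := ⟨e, he, Or.inr rfl⟩
    have c3 : e'.1 ∈ coveredE M := ⟨e', he', Or.inl rfl⟩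
    have c4 : e'.2 ∈ coveredE M := ⟨e', he', Or.inr rfl⟩
    simp only [Finset.mem_insert, Finset.mem_singleton] at ha ha'
    rcases ha with ha | ha <;> rcases ha' with ha' | ha'
    · exact h1 (hinj c1 c3 (ha.symm.trans ha'))
    · exact h2 (hinj c1 c4 (ha.symm.trans ha'))
    · exact h3 (hinj c2 c3 (ha.symm.trans ha'))
    · exact h4 (hinj c2 c4 (ha.symm.trans ha'))
  have hm1 : ∀ e ∈ M, f (g e).1 ∈ ({f e.1, f e.2} : Finset ℕ) := by
    intro e he
    rw [← (hg e he).2.2.1]; simp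
  have hm2 : ∀ e ∈ M, f (g e).2 ∈ ({f e.1, f e.2} : Finset ℕ) := by
    intro e he
    rw [← (hg e he).2.2.1]; simp
  have hdist : ∀ e ∈ M, f (g e).1 ≠ f (g e).2 := by
    intro e he heq
    have hs := (hg e he).2.2.1
    have c1 : e.1 ∈ coveredE M := ⟨e, he, Or.inl rfl⟩
    have c2 : e.2 ∈ coveredE M := ⟨e, he, Or.inr rfl⟩
    have hne : f e.1 ≠ f e.2 := fun h => (hE e (hME he)).1.ne (hinj c1 c2 h)
    have hc := congrArg Finset.card hs
    rw [Finset.card_pair hne, heq] at hc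
    simp at hc
  have hginj : Set.InjOn g (M : Set (ℕ × ℕ)) := by
    intro e he e' he' h
    exact hpart e he e' he' _ (hm1 e he) (h ▸ hm1 e' he')
  have hnice : NiceE f (M.image g) := by
    rintro v ⟨x, hx, hv⟩ w ⟨y, hy, hw⟩ hvw
    obtain ⟨e, he, rfl⟩ := Finset.mem_image.mp hx
    obtain ⟨e', he', rfl⟩ := Finset.mem_image.mp hy
    have hee : e = e' := by
      refine hpart e he e' he' (f v) ?_ ?_
      · rcases hv with rfl | rfl
        · exact hm1 e he
        · exact hm2 e he
      · rw [hvw]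
        rcases hw with rfl | rfl
        · exact hm1 e' he'
        · exact hm2 e' he'
    subst hee
    have hd := hdist e he
    rcases hv with rfl | rfl <;> rcases hw with rfl | rfl
    · rfl
    · exact absurd hvw hd
    · exact absurd hvw.symm hd
    · rfl
  have hmatch : IsMatchingE (M.image g) := by
    intro x hx y hy hxy
    obtain ⟨e, he, rfl⟩ := Finset.mem_image.mp hx
    obtain ⟨e', he', rfl⟩ := Finset.mem_image.mp hy
    have hne : e ≠ e' := fun h => hxy (h ▸ rfl)
    refine ⟨fun h => hne ?_, fun h => hne ?_, fun h => hne ?_, fun h => hne ?_⟩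
    · exact hpart e he e' he' _ (hm1 e he) (h ▸ hm1 e' he')
    · exact hpart e he e' he' _ (hm1 e he) (h ▸ hm2 e' he')
    · exact hpart e he e' he' _ (hm2 e he) (h ▸ hm1 e' he')
    · exact hpart e he e' he' _ (hm2 e he) (h ▸ hm2 e' he')
  have hcard : (M.image g).card = k := by
    rw [Finset.card_image_of_injOn hginj, hMc]
  have hsubE : M.image g ⊆ E := by
    intro x hx
    obtain ⟨e, he, rfl⟩ := Finset.mem_image.mp hx
    exact (hg e he).1
  have hsub : M.image g ⊆ CompactG wt f E := by
    intro x hx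
    obtain ⟨e, he, rfl⟩ := Finset.mem_image.mp hx
    refine Finset.mem_filter.mpr ⟨(hg e he).1, hdist e he, ?_⟩
    intro e' he' hp
    exact (hg e he).2.2.2 e' he' (hp.trans (hg e he).2.2.1)
  have hw : mweight wt (M.image g) = mweight wt M := by
    apply le_antisymm
    · exact hMmax _ ⟨hsubE, hcard, hmatch⟩
    · unfold mweight
      rw [Finset.sum_image hginj]
      exact Finset.sum_le_sum (fun e he => (hg e he).2.1)
  exact ⟨M.image g, ⟨hsub, hcard, hmatch⟩, hnice, hw, fun M'' h => hw ▸ hMmax M'' h⟩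
end
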